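/- arXiv:1410.3997 — 5 statements merged into one kernel-verified Lean document; each statement's English description precedes it below -/
import Mathlib

section
/- Let f : D → D be an area preserving reversible homeomorphism of the closed unit disk D which is isotopic to the identity (equivalently, orientation preserving). Then either (i) the set of odd-periodic points of f (points z with f^k(z) = z for some odd integer k ≥ 1) consists of exactly one point z, and this z lies in the open disk D̊ and satisfies f(z) = z and I(z) = z; or (ii) the set of interior symmetric odd-periodic points of f (points z ∈ D̊ with f^k(z) = z for some odd k ≥ 1 and f^ℓ(z) = I(z) for some integer ℓ ≥ 1) is infinite. -/
open MeasureTheory Set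

noncomputable section

/-- The reflection `I(x,y) = (-x,y)` on the plane. -/
def refl2 : ℝ × ℝ → ℝ × ℝ := fun p => (-p.1, p.2)

/-- The Euclidean norm `|z| = √(x² + y²)` on `ℝ²`. -/
def enorm2 (p : ℝ × ℝ) : ℝ := Real.sqrt (p.1 ^ 2 + p.2 ^ 2)

/-- The closed unit disk `D = {z : |z| ≤ 1}`. -/
def disk : Set (ℝ × ℝ) := {p | enorm2 p ≤ 1}

/-- The open unit disk `D̊ = {z : |z| < 1}`, the interior of `D`. -/
def diskInt : Set (ℝ × ℝ) := {p | enorm2 p < 1}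

lemma enorm2_refl2 (p : ℝ × ℝ) : enorm2 (refl2 p) = enorm2 p := by
  simp [enorm2, refl2, neg_sq]

lemma refl2_mem_disk {p : ℝ × ℝ} (h : p ∈ disk) : refl2 p ∈ disk := by
  simpa [disk, enorm2_refl2] using h

/-- The restriction `I_D` of the reflection to the closed disk. -/
def ID : disk → disk := fun z => ⟨refl2 z, refl2_mem_disk z.2⟩

/-- A self-homeomorphism `f` of a set `Ω ⊆ ℝ²` is isotopic to the identity:
there is a continuous `H : [0,1] × Ω → Ω` such that each `H(s,·)` is a
homeomorphism of `Ω`, `H(0,·) = id` and `H(1,·) = f`. -/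
def IsotopicToId {Ω : Set (ℝ × ℝ)} (f : Ω ≃ₜ Ω) : Prop :=
  ∃ H : (Set.Icc (0:ℝ) 1) × Ω → Ω, Continuous H ∧
    (∀ s, ∃ e : Ω ≃ₜ Ω, ∀ z, H (s, z) = e z) ∧
    (∀ z, H (⟨0, by norm_num⟩, z) = z) ∧
    (∀ z, H (⟨1, by norm_num⟩, z) = f z)

/-- The complex coordinate of a point of the disk. -/
def cx (z : disk) : ℂ := ⟨z.1.1, z.1.2⟩

lemma continuous_cx : Continuous cx := by
  have h : Continuous fun z : disk => Complex.equivRealProdCLM.symm z.1 :=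
    Complex.equivRealProdCLM.symm.continuous.comp continuous_subtype_val
  exact h

lemma cx_injective : Function.Injective cx := by
  intro a b h
  have h1 := congrArg Complex.re h
  have h2 := congrArg Complex.im h
  exact Subtype.ext (Prod.ext h1 h2)

lemma cx_sub_ne_zero {x y : disk} (h : x ≠ y) : cx y - cx x ≠ 0 :=
  sub_ne_zero.2 fun e => h (cx_injective e).symm

lemma cx_ID (z : disk) : cx (ID z) = -(starRingEnd ℂ) (cx z) := by
  apply Complex.ext <;> simp [cx, ID, refl2]

lemma ID_ID (z : disk) : ID (ID z) = z := by
  apply Subtype.ext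
  simp [ID, refl2]

lemma ID_injective : Function.Injective ID := fun a b h => by
  rw [← ID_ID a, h, ID_ID]

lemma continuous_ID : Continuous ID := by
  apply Continuous.subtype_mk
  unfold refl2
  fun_prop

/-- `L x y` is a continuous branch, symmetric in `(x, y)`, of the logarithm of
`(f y - f x) / (y - x)` on pairs of distinct points of the disk. -/
structure AngleLift (f : disk → disk) (L : disk → disk → ℂ) : Prop where
  continuousOn : ContinuousOn (fun q : disk × disk => L q.1 q.2) {q | q.1 ≠ q.2}
  symm : ∀ x y, L x y = L y x
  exp_mul : ∀ x y, x ≠ y → Complex.exp (L x y) * (cx y - cx x) = cx (f y) - cx (f x)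

/-- The covering map `exp : ℂ → ℂ \ {0}`. -/
def expCover (z : ℂ) : {z : ℂ // z ≠ 0} := ⟨Complex.exp z, z.exp_ne_zero⟩

lemma isCoveringMap_expCover : IsCoveringMap expCover := Complex.isCoveringMap_exp

/-- Ordered pairs of distinct points of the disk. -/
abbrev OffDiagonal := {q : disk × disk // q.1 ≠ q.2}

lemma exists_angleLift (f : disk ≃ₜ disk) (hiso : IsotopicToId f) :
    ∃ L, AngleLift f L := by
  obtain ⟨H, hH, hhomeo, h0, h1⟩ := hiso
  have hinj : ∀ s, Function.Injective fun z => H (s, z) := by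
    intro s
    obtain ⟨e, he⟩ := hhomeo s
    simpa only [he] using e.injective
  have hnum : ∀ (t : unitInterval) (a : OffDiagonal),
      (cx (H (t, a.1.2)) - cx (H (t, a.1.1))) / (cx a.1.2 - cx a.1.1) ≠ 0 := fun t a =>
    div_ne_zero (cx_sub_ne_zero fun e => a.2 (hinj t e)) (cx_sub_ne_zero a.2)
  let K : C(unitInterval × OffDiagonal, {z : ℂ // z ≠ 0}) :=
    ⟨fun p => ⟨(cx (H (p.1, p.2.1.2)) - cx (H (p.1, p.2.1.1))) / (cx p.2.1.2 - cx p.2.1.1),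
      hnum p.1 p.2⟩, by
      apply Continuous.subtype_mk
      apply Continuous.div
      · apply Continuous.sub <;> apply continuous_cx.comp <;> apply hH.comp <;> fun_prop
      · apply Continuous.sub <;> apply continuous_cx.comp <;> fun_prop
      · exact fun p => cx_sub_ne_zero p.2.2⟩
  have hK0 : ∀ a, K (0, a) = expCover ((0 : C(OffDiagonal, ℂ)) a) := by
    intro a
    apply Subtype.ext
    have e : ∀ z, H (0, z) = z := h0
    simp [K, expCover, e, div_self (cx_sub_ne_zero a.2)]
  let G := isCoveringMap_expCover.liftHomotopy K 0 hK0
  have hG : ∀ t a, Complex.exp (G (t, a)) =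
      (cx (H (t, a.1.2)) - cx (H (t, a.1.1))) / (cx a.1.2 - cx a.1.1) := fun t a =>
    congrArg Subtype.val (congrFun (isCoveringMap_expCover.liftHomotopy_lifts K 0 hK0) (t, a))
  have hG0 : ∀ a, G (0, a) = 0 := isCoveringMap_expCover.liftHomotopy_zero K 0 hK0
  have hsymm : ∀ t (a : OffDiagonal), G (t, ⟨(a.1.2, a.1.1), a.2.symm⟩) = G (t, a) := by
    intro t a
    refine congrFun ((isCoveringMap_expCover.eq_liftHomotopy_iff hK0
      (fun p => G (p.1, ⟨(p.2.1.2, p.2.1.1), p.2.2.symm⟩))).2 ⟨?_, ?_, ?_⟩) (t, a)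
    · intro a
      exact G.continuous.comp (by fun_prop)
    · ext ⟨t, a⟩
      change Complex.exp _ = (cx _ - cx _) / (cx _ - cx _)
      rw [hG, ← neg_sub (cx (H (t, a.1.2))), ← neg_sub (cx a.1.2), neg_div_neg_eq]
    · intro a
      exact hG0 _
  classical
  refine ⟨fun x y => if h : x ≠ y then G (1, ⟨(x, y), h⟩) else 0, ?_, ?_, ?_⟩
  · rw [continuousOn_iff_continuous_domRestrict]
    have : Continuous fun a : OffDiagonal => G (1, a) := G.continuous.comp (by fun_prop)
    exact this.congr fun a => by
      simp [Set.domRestrict, a.2]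
  · intro x y
    by_cases h : x = y
    · simp [h]
    · simp only [ne_eq, h, not_false_eq_true, dif_pos, Ne.symm h]
      exact (hsymm 1 ⟨(x, y), h⟩).symm
  · intro x y h
    have e : ∀ z, H (1, z) = f z := h1
    rw [dif_pos h, hG, e, e, div_mul_cancel₀ _ (cx_sub_ne_zero h)]

/-- Reversibility `f ∘ I ∘ f = I`. -/
def Rev (f : disk → disk) : Prop := ∀ z, f (ID (f z)) = ID z

lemma Rev.injective {f : disk → disk} (h : Rev f) : Function.Injective f := fun a b e =>
  ID_injective (by rw [← h a, e, h b])

lemma Rev.iterate {f : disk → disk} (h : Rev f) (n : ℕ) : Rev f^[n] := by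
  induction n with
  | zero => exact fun z => rfl
  | succ n ih =>
    intro z
    rw [Function.iterate_succ_apply, Function.iterate_succ_apply', h, ih]

lemma AngleLift.iterate {f : disk → disk} {L : disk → disk → ℂ} (hL : AngleLift f L)
    (hf : Continuous f) (hinj : Function.Injective f) (n : ℕ) :
    AngleLift f^[n] fun x y => ∑ i ∈ Finset.range n, L (f^[i] x) (f^[i] y) := by
  refine ⟨?_, ?_, ?_⟩
  · refine continuousOn_finsetSum _ fun i _ => ?_
    have hc : Continuous fun q : disk × disk => (f^[i] q.1, f^[i] q.2) :=
      ((hf.iterate i).comp continuous_fst).prodMk ((hf.iterate i).comp continuous_snd)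
    exact hL.continuousOn.comp hc.continuousOn fun q hq e => hq (hinj.iterate i e)
  · exact fun x y => Finset.sum_congr rfl fun i _ => hL.symm _ _
  · intro x y hxy
    induction n with
    | zero => simp
    | succ n ih =>
      rw [Finset.sum_range_succ, Complex.exp_add, mul_right_comm, ih, mul_comm,
        hL.exp_mul _ _ fun e => hxy (hinj.iterate n e), Function.iterate_succ_apply',
        Function.iterate_succ_apply']

lemma AngleLift.sub_int {f : disk → disk} {L : disk → disk → ℂ} (hL : AngleLift f L) (n : ℤ) :
    AngleLift f fun x y => L x y - n * (2 * Real.pi * Complex.I) := by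
  refine ⟨hL.continuousOn.sub continuousOn_const, fun x y => by rw [hL.symm], fun x y h => ?_⟩
  rw [Complex.exp_sub, Complex.exp_int_mul_two_pi_mul_I, div_one, hL.exp_mul x y h]

/-- A continuous nonvanishing complex function on the unit interval has a continuous logarithm. -/
lemma exists_continuous_log (v : C(unitInterval, ℂ)) (hv : ∀ t, v t ≠ 0) :
    ∃ l : C(unitInterval, ℂ), ∀ t, Complex.exp (l t) = v t := by
  let γ : C(unitInterval, {z : ℂ // z ≠ 0}) := ⟨fun t => ⟨v t, hv t⟩, by fun_prop⟩
  obtain ⟨l, hl, -⟩ := isCoveringMap_expCover.exists_path_lifts γ (Complex.log (v 0))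
    (Subtype.ext (Complex.exp_log (hv 0)).symm)
  exact ⟨l, fun t => congrArg Subtype.val (congrFun hl t)⟩

/-- A continuous function on a preconnected set with values in `2πi ℤ` is constant. -/
lemma IsPreconnected.eq_of_exp_eq_one {X : Type*} [TopologicalSpace X] {s : Set X}
    (hs : IsPreconnected s) {h : X → ℂ} (hc : ContinuousOn h s)
    (h1 : ∀ x ∈ s, Complex.exp (h x) = 1) {x y : X} (hx : x ∈ s) (hy : y ∈ s) : h x = h y := by
  have := isPreconnected_iff_preconnectedSpace.1 hs
  refine isCoveringMap_expCover.isSeparatedMap.const_of_comp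
    isCoveringMap_expCover.isLocalHomeomorph.isLocallyInjective (g := s.domRestrict h)
    (continuousOn_iff_continuous_domRestrict.1 hc) (fun a b => ?_) ⟨x, hx⟩ ⟨y, hy⟩
  exact Subtype.ext ((h1 a a.2).trans (h1 b b.2).symm)

/-- The involution `f ∘ I` cannot exchange the ends of a path of `I`-fixed points
without fixing some point of the path. -/
lemma exists_fixed_of_path {f : disk → disk} {L : disk → disk → ℂ} (hL : AngleLift f L)
    (hf : Continuous f) (hrev : Rev f) (γ : C(unitInterval, disk)) (hγ : ∀ t, ID (γ t) = γ t)
    (h01 : f (γ 0) = γ 1) : ∃ t, f (γ t) = γ t := by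
  by_contra! hne
  have h10 : f (γ 1) = γ 0 := by
    rw [← hγ 1, ← h01, hrev, hγ]
  have hv : ∀ t, cx (f (γ t)) - cx (γ t) ≠ 0 := fun t => cx_sub_ne_zero (hne t).symm
  obtain ⟨l, hl⟩ := exists_continuous_log
    ⟨fun t => cx (f (γ t)) - cx (γ t), by
      have := continuous_cx
      fun_prop⟩ hv
  simp only [ContinuousMap.coe_mk] at hl
  have hdist : ∀ t, γ t ≠ ID (f (γ t)) := fun t e =>
    hne t (ID_injective (by rw [← e, hγ]))
  have key : L (γ 0) (ID (f (γ 0))) - (l 0 - (starRingEnd ℂ) (l 0)) =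
      L (γ 1) (ID (f (γ 1))) - (l 1 - (starRingEnd ℂ) (l 1)) := by
    refine isPreconnected_univ.eq_of_exp_eq_one (s := univ)
      (h := fun t => L (γ t) (ID (f (γ t))) - (l t - (starRingEnd ℂ) (l t)))
      (ContinuousOn.sub ?_ ?_) ?_ (mem_univ 0) (mem_univ 1)
    · have hc : Continuous fun t => (γ t, ID (f (γ t))) :=
        γ.continuous.prodMk (continuous_ID.comp (hf.comp γ.continuous))
      exact hL.continuousOn.comp hc.continuousOn fun t _ => hdist t
    · have := Complex.continuous_conj
      fun_prop
    · intro t _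
      have e := hL.exp_mul _ _ (hdist t)
      rw [hrev, hγ, cx_ID] at e
      have e2 : cx (γ t) = -(starRingEnd ℂ) (cx (γ t)) := by rw [← cx_ID, hγ]
      have e3 : -(starRingEnd ℂ) (cx (f (γ t))) - cx (γ t) =
          -(starRingEnd ℂ) (Complex.exp (l t)) := by
        rw [hl, map_sub]
        nth_rw 1 [e2]
        ring
      rw [e3, ← neg_sub, ← hl] at e
      rw [Complex.exp_sub, Complex.exp_sub, ← Complex.exp_conj] at *
      have n1 := Complex.exp_ne_zero (l t)
      have n2 := Complex.exp_ne_zero ((starRingEnd ℂ) (l t))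
      field_simp
      linear_combination -e
  rw [h01, h10, hγ, hγ, hL.symm (γ 1)] at key
  have him : (l 0).im = (l 1).im := by
    have := congrArg Complex.im key
    simp at this
    linarith
  have e0 := hl 0
  have e1 := hl 1
  rw [h01] at e0
  rw [h10, ← neg_sub, ← e0] at e1
  have hexp : Complex.exp (l 1 - l 0) = -1 := by
    rw [Complex.exp_sub, e1, neg_div, div_self (Complex.exp_ne_zero _)]
  have hre : l 1 - l 0 = (((l 1).re - (l 0).re : ℝ) : ℂ) := by
    apply Complex.ext <;> simp [him]
  rw [hre, ← Complex.ofReal_exp] at hexp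
  have := congrArg Complex.re hexp
  simp only [Complex.ofReal_re, Complex.neg_re, Complex.one_re] at this
  linarith [Real.exp_pos ((l 1).re - (l 0).re)]

/-- The point of the axis `x = 0` with height `t`, clamped to `[-1, 1]`. -/
def ax (t : ℝ) : disk := ⟨(0, max (-1) (min 1 t)), by
  have : (max (-1) (min 1 t)) ^ 2 ≤ 1 := by
    rw [sq_le_one_iff_abs_le_one, abs_le]
    exact ⟨le_max_left _ _, max_le (by norm_num) (min_le_left _ _)⟩
  simpa [disk, enorm2] using this⟩

lemma continuous_ax : Continuous ax := by
  apply Continuous.subtype_mk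
  fun_prop

lemma ID_ax (t : ℝ) : ID (ax t) = ax t := by
  apply Subtype.ext
  simp [ID, refl2, ax]

lemma ax_snd {t : ℝ} (ht : t ∈ Icc (-1) 1) : (ax t).1.2 = t := by
  simp [ax, ht.1, ht.2]

lemma cx_ax {t : ℝ} (ht : t ∈ Icc (-1) 1) : cx (ax t) = t * Complex.I := by
  apply Complex.ext
  · simp [cx, ax]
  · simp [cx, ax_snd ht]

lemma ax_inj {s t : ℝ} (hs : s ∈ Icc (-1) 1) (ht : t ∈ Icc (-1) 1) (h : ax s = ax t) : s = t := by
  rw [← ax_snd hs, h, ax_snd ht]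

lemma sq_le_of_disk (z : disk) : z.1.1 ^ 2 + z.1.2 ^ 2 ≤ 1 := by
  have h : Real.sqrt (z.1.1 ^ 2 + z.1.2 ^ 2) ≤ 1 := z.2
  rwa [Real.sqrt_le_one] at h

lemma snd_mem (z : disk) : z.1.2 ∈ Icc (-1 : ℝ) 1 := by
  have := sq_le_of_disk z
  constructor <;> nlinarith [sq_nonneg z.1.1]

lemma eq_ax_of_fst {z : disk} (h : z.1.1 = 0) : z = ax z.1.2 :=
  Subtype.ext (Prod.ext h (ax_snd (snd_mem z)).symm)

lemma exists_fixed_axis {f : disk → disk} {L : disk → disk → ℂ} (hL : AngleLift f L)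
    (hf : Continuous f) (hrev : Rev f) {a b : ℝ} (h : f (ax a) = ax b) :
    ∃ t ∈ uIcc a b, f (ax t) = ax t := by
  obtain ⟨τ, hτ⟩ := exists_fixed_of_path hL hf hrev
    ⟨fun τ => ax (a + τ * (b - a)), continuous_ax.comp (by fun_prop)⟩
    (fun _ => ID_ax _) (by simpa using h)
  refine ⟨a + τ * (b - a), ?_, hτ⟩
  have h0 := τ.2.1
  have h1 := τ.2.2
  rw [mem_uIcc]
  rcases le_total a b with hab | hab
  · left; constructor <;> nlinarith
  · right; constructor <;> nlinarith

/-- Area on the disk. -/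
abbrev area : Measure disk := (volume : Measure (ℝ × ℝ)).comap (Subtype.val : disk → ℝ × ℝ)

lemma mem_disk_iff {p : ℝ × ℝ} : p ∈ disk ↔ p.1 ^ 2 + p.2 ^ 2 ≤ 1 := by
  simp [disk, enorm2]

lemma isClosed_disk : IsClosed disk := by
  have : disk = {p : ℝ × ℝ | p.1 ^ 2 + p.2 ^ 2 ≤ 1} := Set.ext fun p => mem_disk_iff
  rw [this]
  exact isClosed_le (by fun_prop) continuous_const

lemma convex_disk : Convex ℝ disk := by
  intro p hp q hq a b ha hb hab
  rw [mem_disk_iff] at *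
  simp only [Prod.fst_add, Prod.smul_fst, Prod.snd_add, Prod.smul_snd, smul_eq_mul]
  obtain rfl : b = 1 - a := by linarith
  nlinarith [mul_nonneg ha hb, mul_nonneg (mul_nonneg ha hb) (sq_nonneg (p.1 - q.1)),
    mul_nonneg (mul_nonneg ha hb) (sq_nonneg (p.2 - q.2)), mul_nonneg ha (sub_nonneg.2 hp),
    mul_nonneg hb (sub_nonneg.2 hq)]

lemma area_apply (s : Set disk) : area s = volume (Subtype.val '' s) :=
  (MeasurableEmbedding.subtype_coe isClosed_disk.measurableSet).comap_apply _ _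

instance : IsFiniteMeasure area := by
  refine ⟨?_⟩
  rw [area_apply]
  refine lt_of_le_of_lt (measure_mono (t := Metric.closedBall (0 : ℝ × ℝ) 1) ?_)
    measure_closedBall_lt_top
  rintro _ ⟨z, -, rfl⟩
  have := sq_le_of_disk z
  rw [mem_closedBall_zero_iff, Prod.norm_def, max_le_iff, Real.norm_eq_abs, Real.norm_eq_abs,
    ← sq_le_one_iff_abs_le_one, ← sq_le_one_iff_abs_le_one]
  constructor <;> nlinarith [sq_nonneg z.1.1, sq_nonneg z.1.2]

lemma area_pos_of_isOpen {U : Set disk} (hU : IsOpen U) (hne : U.Nonempty) : 0 < area U := by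
  obtain ⟨V, hV, rfl⟩ := isOpen_induced_iff.1 hU
  obtain ⟨z, hz⟩ := hne
  let W : Set (ℝ × ℝ) := {p | p.1 ^ 2 + p.2 ^ 2 < 1}
  have hW : IsOpen W := isOpen_lt (by fun_prop) continuous_const
  have hc : Filter.Tendsto (fun r : ℝ => r • z.1) (nhdsWithin 1 (Iio 1)) (nhds z.1) := by
    have : Continuous fun r : ℝ => r • z.1 := by fun_prop
    simpa using (this.tendsto 1).mono_left nhdsWithin_le_nhds
  obtain ⟨r, hrV, hr1, hr0⟩ := ((hc.eventually (hV.mem_nhds hz)).and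
    ((eventually_mem_nhdsWithin (a := (1 : ℝ)) (s := Iio 1)).and
      (nhdsWithin_le_nhds (lt_mem_nhds (zero_lt_one' ℝ))))).exists
  have hrW : r • z.1 ∈ W := by
    have h := sq_le_of_disk z
    have h1 : r < 1 := hr1
    have h0 : 0 < r := hr0
    change (r * z.1.1) ^ 2 + (r * z.1.2) ^ 2 < 1
    nlinarith [mul_nonneg (sq_nonneg r) (sub_nonneg.2 h)]
  rw [area_apply]
  refine lt_of_lt_of_le ((hV.inter hW).measure_pos volume ⟨_, hrV, hrW⟩) (measure_mono ?_)
  exact fun p hp => ⟨⟨p, mem_disk_iff.2 (le_of_lt hp.2)⟩, hp.1, rfl⟩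

lemma area_axis : area {z | z.1.1 = 0} = 0 := by
  rw [area_apply]
  refine measure_mono_null (t := ({0} : Set ℝ) ×ˢ (univ : Set ℝ)) ?_ ?_
  · rintro _ ⟨z, hz, rfl⟩
    exact ⟨hz, mem_univ _⟩
  · rw [Measure.volume_eq_prod, Measure.prod_prod]
    simp

lemma area_side_neg (c : ℝ) : area {z | 0 < -c * z.1.1} = area {z | 0 < c * z.1.1} := by
  have hmp : MeasurePreserving refl2 volume volume :=
    (Measure.measurePreserving_neg (volume : Measure ℝ)).prod
      (MeasurePreserving.id (volume : Measure ℝ))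
  have hset : ∀ c : ℝ, (Subtype.val '' {z : disk | 0 < c * z.1.1}) = disk ∩ {p | 0 < c * p.1} := by
    intro c
    ext p
    constructor
    · rintro ⟨z, hz, rfl⟩
      exact ⟨z.2, hz⟩
    · exact fun h => ⟨⟨p, h.1⟩, h.2, rfl⟩
  rw [area_apply, area_apply, hset, hset, ← hmp.measure_preimage]
  · congr 1
    ext p
    simp [mem_disk_iff, refl2]
  · exact (isClosed_disk.measurableSet.inter
      (measurableSet_lt measurable_const (by fun_prop))).nullMeasurableSet

lemma isOpen_side (c : ℝ) : IsOpen {z : disk | 0 < c * z.1.1} :=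
  isOpen_lt continuous_const (by fun_prop)

lemma isPreconnected_side (c : ℝ) : IsPreconnected {z : disk | 0 < c * z.1.1} := by
  rw [← Topology.IsInducing.subtypeVal.isPreconnected_image]
  have : Convex ℝ (disk ∩ {p | 0 < c * p.1}) := by
    refine convex_disk.inter ?_
    intro p hp q hq a b ha hb hab
    simp only [mem_ofPred_eq, Prod.fst_add, Prod.smul_fst, smul_eq_mul] at *
    have e : c * (a * p.1 + b * q.1) = a * (c * p.1) + b * (c * q.1) := by ring
    rw [e]
    rcases ha.eq_or_lt with rfl | ha
    · obtain rfl : b = 1 := by linarith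
      simpa using hq
    · have := mul_pos ha hp
      have := mul_nonneg hb hq.le
      linarith
  convert this.isPreconnected using 1
  ext p
  constructor
  · rintro ⟨z, hz, rfl⟩
    exact ⟨z.2, hz⟩
  · exact fun h => ⟨⟨p, h.1⟩, h.2, rfl⟩

/-- Interior axis points are accumulated from both sides. -/
lemma exists_mem_side {U : Set disk} (hU : IsOpen U) {t : ℝ} (ht : t ∈ Ioo (-1) 1)
    (htU : ax t ∈ U) {c : ℝ} (hc : c ≠ 0) : ∃ z ∈ U, 0 < c * z.1.1 := by
  obtain ⟨V, hV, rfl⟩ := isOpen_induced_iff.1 hU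
  have hval : (ax t).1 = (0, t) :=
    Prod.ext rfl (ax_snd (Ioo_subset_Icc_self ht))
  have hcont : Continuous fun e : ℝ => ((c * e, t) : ℝ × ℝ) := by fun_prop
  have h1 : ∀ᶠ e in nhdsWithin (0 : ℝ) (Ioi 0), ((c * e, t) : ℝ × ℝ) ∈ V := by
    refine nhdsWithin_le_nhds ((hcont.tendsto 0).eventually (hV.mem_nhds ?_))
    have htV : (ax t).1 ∈ V := htU
    rw [hval] at htV
    simpa using htV
  have h2 : ∀ᶠ e in nhdsWithin (0 : ℝ) (Ioi 0), (c * e) ^ 2 + t ^ 2 < 1 := by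
    have hcont : Continuous fun e : ℝ => (c * e) ^ 2 + t ^ 2 := by fun_prop
    refine nhdsWithin_le_nhds ((hcont.tendsto 0).eventually (gt_mem_nhds ?_))
    have := ht.1
    have := ht.2
    simp only [mul_zero]
    nlinarith
  obtain ⟨e, he1, he2, he⟩ := (h1.and (h2.and self_mem_nhdsWithin)).exists
  refine ⟨⟨(c * e, t), mem_disk_iff.2 he2.le⟩, he1, ?_⟩
  have : 0 < e := he
  change 0 < c * (c * e)
  rw [← mul_assoc]
  exact mul_pos (mul_self_pos.2 hc) this

lemma Rev.leftInverse {f : disk → disk} (h : Rev f) (z : disk) : ID (f (ID (f z))) = z := by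
  rw [h, ID_ID]

lemma Rev.rightInverse {f : disk → disk} (h : Rev f) (z : disk) : f (ID (f (ID z))) = z := by
  rw [h, ID_ID]

/-- An area preserving reversible map with `f (axis)` weakly on one side of the axis
has an interior fixed point on the axis. -/
lemma not_axis_one_side {f : disk → disk} (hf : Continuous f) (hrev : Rev f)
    (hmp : MeasurePreserving f area area) {c : ℝ} (hc : c ≠ 0)
    (hside : ∀ t, 0 ≤ c * (f (ax t)).1.1) (h0 : 0 < c * (f (ax 0)).1.1) : False := by
  have hP : IsPreconnected (f ⁻¹' {z | 0 < -c * z.1.1}) := by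
    have : f ⁻¹' {z | 0 < -c * z.1.1} = (fun z => ID (f (ID z))) '' {z | 0 < -c * z.1.1} := by
      ext z
      constructor
      · exact fun hz => ⟨f z, hz, hrev.leftInverse z⟩
      · rintro ⟨y, hy, rfl⟩
        simpa only [mem_preimage, hrev.rightInverse y] using hy
    rw [this]
    exact (isPreconnected_side _).image _
      (continuous_ID.comp (hf.comp continuous_ID)).continuousOn
  have hmeas : area (f ⁻¹' {z | 0 < -c * z.1.1}) = area {z | 0 < -c * z.1.1} :=
    hmp.measure_preimage (isOpen_side _).measurableSet.nullMeasurableSet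
  have hno : ∀ d : ℝ, d ≠ 0 → area {z | 0 < d * z.1.1} = area {z | 0 < -c * z.1.1} →
      f ⁻¹' {z | 0 < -c * z.1.1} ⊆ {z | 0 < d * z.1.1} → False := by
    intro d hd hda hsub
    have hnull : area ({z | 0 < d * z.1.1} \ f ⁻¹' {z | 0 < -c * z.1.1}) = 0 := by
      rw [measure_sdiff hsub (hf.measurable (isOpen_side _).measurableSet).nullMeasurableSet
        (measure_ne_top _ _), hmeas, hda, tsub_self]
    have hopen : IsOpen ({z | 0 < d * z.1.1} ∩ f ⁻¹' {z | 0 < c * z.1.1}) :=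
      (isOpen_side _).inter ((isOpen_side _).preimage hf)
    obtain ⟨z, hz, hzd⟩ := exists_mem_side ((isOpen_side c).preimage hf)
      (t := 0) (by norm_num) h0 hd
    refine (area_pos_of_isOpen hopen ⟨z, hzd, hz⟩).ne' (measure_mono_null ?_ hnull)
    rintro y ⟨hy1, hy2⟩
    refine ⟨hy1, fun hy3 => ?_⟩
    simp only [mem_preimage, mem_ofPred_eq] at hy2 hy3
    linarith
  have hcov : f ⁻¹' {z | 0 < -c * z.1.1} ⊆ {z | 0 < c * z.1.1} ∪ {z | 0 < -c * z.1.1} := by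
    intro z hz
    rcases lt_trichotomy (c * z.1.1) 0 with h | h | h
    · right
      simp only [mem_ofPred_eq]
      linarith
    · have hz0 : z.1.1 = 0 := (mul_eq_zero.1 h).resolve_left hc
      have := hside z.1.2
      rw [← eq_ax_of_fst hz0] at this
      simp only [mem_preimage, mem_ofPred_eq] at hz
      linarith
    · exact Or.inl h
  have hdisj : {z : disk | 0 < c * z.1.1} ∩ {z | 0 < -c * z.1.1} = ∅ := by
    ext z
    simp only [mem_inter_iff, mem_ofPred_eq, mem_empty_iff_false, iff_false, not_and, not_lt]
    intro h
    linarith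
  rcases hP.subset_or_subset (isOpen_side c) (isOpen_side (-c))
    (Set.disjoint_iff_inter_eq_empty.2 hdisj) hcov with h | h
  · exact hno c hc (area_side_neg c).symm h
  · exact hno (-c) (neg_ne_zero.2 hc) rfl h

lemma exists_fixed_axis_interior {f : disk → disk} {L : disk → disk → ℂ} (hL : AngleLift f L)
    (hf : Continuous f) (hrev : Rev f) (hmp : MeasurePreserving f area area) :
    ∃ t ∈ Ioo (-1 : ℝ) 1, f (ax t) = ax t := by
  by_contra! hne
  let T : Set ℝ := {t | t ∈ Icc (-1) 1 ∧ f (ax t) ≠ ax t}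
  have hT : T.OrdConnected := by
    refine ⟨fun a ha b hb t ht => ⟨⟨ha.1.1.trans ht.1, ht.2.trans hb.1.2⟩, ?_⟩⟩
    rcases ht.1.eq_or_lt with rfl | h1
    · exact ha.2
    rcases ht.2.eq_or_lt with rfl | h2
    · exact hb.2
    exact hne t ⟨ha.1.1.trans_lt h1, h2.trans_le hb.1.2⟩
  have h0T : (0 : ℝ) ∈ T := ⟨by norm_num, hne 0 (by norm_num)⟩
  have hoff : ∀ t ∈ T, (f (ax t)).1.1 ≠ 0 := by
    intro t ht h
    have e := eq_ax_of_fst h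
    set u := (f (ax t)).1.2 with hu
    have huI : u ∈ Icc (-1 : ℝ) 1 := snd_mem _
    have huT : u ∈ T := by
      refine ⟨huI, fun h2 => ht.2 ?_⟩
      exact hrev.injective (by rw [e, h2])
    obtain ⟨r, hr, hfix⟩ := exists_fixed_axis hL hf hrev e
    exact (hT.uIcc_subset ht huT hr).2 hfix
  have hpre : IsPreconnected ((fun t => f (ax t)) '' T) :=
    hT.isPreconnected.image _ (hf.comp continuous_ax).continuousOn
  have hfin : ∀ c : ℝ, c ≠ 0 → (fun t => f (ax t)) '' T ⊆ {z | 0 < c * z.1.1} → False := by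
    intro c hc hsub
    refine not_axis_one_side hf hrev hmp hc (fun t => ?_) (hsub ⟨0, h0T, rfl⟩)
    obtain ⟨u, hu, e⟩ : ∃ u ∈ Icc (-1 : ℝ) 1, ax t = ax u :=
      ⟨(ax t).1.2, snd_mem _, eq_ax_of_fst rfl⟩
    rw [e]
    by_cases h : f (ax u) = ax u
    · rw [h]
      simp [ax]
    · exact le_of_lt (hsub ⟨u, ⟨hu, h⟩, rfl⟩)
  have hdisj : Disjoint {z : disk | 0 < (1 : ℝ) * z.1.1} {z | 0 < (-1 : ℝ) * z.1.1} := by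
    rw [Set.disjoint_left]
    intro z h1 h2
    simp only [mem_ofPred_eq] at h1 h2
    linarith
  rcases hpre.subset_or_subset (isOpen_side 1) (isOpen_side (-1)) hdisj (by
    rintro _ ⟨t, ht, rfl⟩
    rcases lt_or_gt_of_ne (hoff t ht) with h | h
    · right
      simpa using h
    · left
      simpa using h) with h | h
  · exact hfin 1 one_ne_zero h
  · exact hfin (-1) (by norm_num) h

lemma mem_disk_of_norm {v : ℂ} (h : ‖v‖ ≤ 1) : (v.re, v.im) ∈ disk := by
  rw [mem_disk_iff]
  have := Complex.sq_norm v
  rw [Complex.normSq_apply] at this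
  nlinarith [norm_nonneg v]

lemma norm_cx_le (z : disk) : ‖cx z‖ ≤ 1 := by
  have h := sq_le_of_disk z
  have := Complex.sq_norm (cx z)
  rw [Complex.normSq_apply] at this
  simp only [cx] at this ⊢
  nlinarith [norm_nonneg (⟨z.1.1, z.1.2⟩ : ℂ)]

/-- Logarithmic polar coordinates around an interior point `s`, with the radius cut off so that
they take values in the disk. The imaginary part is the angle, measured from the direction `-i`. -/
lemma exists_polar (s : disk) (hs : ‖cx s‖ < 1) : ∃ pt : ℂ → disk, Continuous pt ∧
    (∀ ζ, ∃ m : ℝ, 0 < m ∧ cx (pt ζ) - cx s = m * (-Complex.I * Complex.exp ζ)) ∧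
    (∀ x ≠ s, pt (Complex.log (Complex.I * (cx x - cx s))) = x) ∧
    ∀ ζ, pt (ζ - 2 * Real.pi * Complex.I) = pt ζ := by
  let K : Set ℂ := Metric.closedBall (-cx s) 1
  have hK0 : K ∈ nhds (0 : ℂ) := by
    refine Filter.mem_of_superset (Metric.isOpen_ball.mem_nhds ?_) Metric.ball_subset_closedBall
    simpa using hs
  have hKc : Convex ℝ K := convex_closedBall _ _
  have hgc : Continuous (gauge K) := continuous_gauge hKc hK0
  have hmem : ∀ v, gauge K v ≤ 1 ↔ v ∈ K := fun v => by
    rw [gauge_le_one_iff_mem_closure hKc hK0, Metric.isClosed_closedBall.closure_eq]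
  have hKn : ∀ v, v ∈ K ↔ ‖cx s + v‖ ≤ 1 := fun v => by
    rw [mem_closedBall_iff_norm, sub_neg_eq_add, add_comm]
  let m : ℂ → ℝ := fun v => (max 1 (gauge K v))⁻¹
  have hm : ∀ v, 0 < m v := fun v => inv_pos.2 (lt_of_lt_of_le one_pos (le_max_left _ _))
  have hmc : Continuous m := by
    refine Continuous.inv₀ (by fun_prop) fun v => ?_
    exact (lt_of_lt_of_le one_pos (le_max_left _ _)).ne'
  have hmK : ∀ v, ‖cx s + m v * v‖ ≤ 1 := by
    intro v
    rw [← hKn, ← hmem, ← Complex.real_smul, gauge_smul_of_nonneg (hm v).le, smul_eq_mul]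
    change (max 1 (gauge K v))⁻¹ * _ ≤ 1
    rw [inv_mul_le_iff₀ (lt_of_lt_of_le one_pos (le_max_left _ _)), mul_one]
    exact le_max_right _ _
  let ray : ℂ → disk := fun v => ⟨((cx s + m v * v).re, (cx s + m v * v).im),
    mem_disk_of_norm (hmK v)⟩
  have hray : ∀ v, cx (ray v) = cx s + m v * v := fun v => Complex.ext rfl rfl
  have hrayc : Continuous ray := by
    apply Continuous.subtype_mk
    fun_prop
  refine ⟨fun ζ => ray (-Complex.I * Complex.exp ζ), hrayc.comp (by fun_prop), ?_, ?_, ?_⟩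
  · intro ζ
    exact ⟨m _, hm _, by rw [hray]; ring⟩
  · intro x hx
    have hne : Complex.I * (cx x - cx s) ≠ 0 :=
      mul_ne_zero Complex.I_ne_zero (cx_sub_ne_zero hx.symm)
    apply cx_injective
    rw [hray, Complex.exp_log hne]
    have e : -Complex.I * (Complex.I * (cx x - cx s)) = cx x - cx s := by
      linear_combination (-(cx x - cx s)) * Complex.I_mul_I
    have h1 : gauge K (cx x - cx s) ≤ 1 := by
      rw [hmem, hKn]
      simpa using norm_cx_le x
    have h2 : m (cx x - cx s) = 1 := by
      simp [m, max_eq_left h1]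
    rw [e, h2]
    simp
  · intro ζ
    simp only [Complex.exp_sub, Complex.exp_two_pi_mul_I, div_one]

/-- The angle of `x` around `s`, with branch cut on the vertical half line above `s`. -/
def angleAt (s x : disk) : ℝ := Complex.arg (Complex.I * (cx x - cx s))

lemma eq_ax_of_sub {σ : ℝ} (hσ : σ ∈ Ioo (-1) 1) {y : disk} {r : ℝ} (hr : 0 < r)
    (h : cx y - cx (ax σ) = r * Complex.I) : ∃ t ∈ Ioc σ 1, y = ax t := by
  rw [cx_ax (Ioo_subset_Icc_self hσ)] at h
  have h1 : y.1.1 = 0 := by simpa [cx] using congrArg Complex.re h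
  have h2 : y.1.2 - σ = r := by simpa [cx] using congrArg Complex.im h
  exact ⟨y.1.2, ⟨by linarith, (snd_mem y).2⟩, eq_ax_of_fst h1⟩

lemma norm_cx_ax_lt {σ : ℝ} (hσ : σ ∈ Ioo (-1) 1) : ‖cx (ax σ)‖ < 1 := by
  rw [cx_ax (Ioo_subset_Icc_self hσ)]
  simpa [abs_lt] using hσ

/-- If the positive axis above the fixed point `s` contains no other interior fixed point, and the
angle variation around `s` vanishes at some other fixed point, the angle variation is bounded. -/
lemma angle_bounds {f : disk → disk} {L : disk → disk → ℂ} (hL : AngleLift f L)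
    (hf : Continuous f) (hrev : Rev f) {σ : ℝ} (hσ : σ ∈ Ioo (-1) 1)
    (hfix : f (ax σ) = ax σ) (hno : ∀ t ∈ Ioo σ 1, f (ax t) ≠ ax t) {w : disk} (hw : w ≠ ax σ)
    (hfw : f w = w) (hLw : L (ax σ) w = 0) :
    ∃ j : ℤ, (j = 0 ∨ j = -1) ∧
      (∀ t ∈ Ioo σ 1, (L (ax σ) (ax t)).im ∈ Ioo (2 * Real.pi * j) (2 * Real.pi * j + 2 * Real.pi)) ∧
      ∀ x ≠ ax σ, angleAt (ax σ) x < Real.pi →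
        angleAt (ax σ) x + (L (ax σ) x).im ∈
          Ioo (2 * Real.pi * j - Real.pi) (2 * Real.pi * j + 3 * Real.pi) := by
  set s := ax σ with hs
  have hpi := Real.pi_pos
  have hσI := Ioo_subset_Icc_self hσ
  obtain ⟨pt, hpt, hpolar, hlog, hper⟩ := exists_polar s (norm_cx_ax_lt hσ)
  have hpts : ∀ ζ, pt ζ ≠ s := by
    intro ζ e
    obtain ⟨m, hm, h⟩ := hpolar ζ
    rw [e, sub_self] at h
    have : (m : ℂ) ≠ 0 := by exact_mod_cast hm.ne'
    exact mul_ne_zero this (mul_ne_zero (neg_ne_zero.2 Complex.I_ne_zero)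
      (Complex.exp_ne_zero ζ)) h.symm
  have hLs : ContinuousOn (fun x => L s x) {s}ᶜ := by
    have hc : Continuous fun x : disk => (s, x) := by fun_prop
    exact hL.continuousOn.comp hc.continuousOn fun x hx e => hx e.symm
  have hconn : IsPreconnected ({s}ᶜ : Set disk) := by
    have : ({s}ᶜ : Set disk) = range pt := by
      ext x
      constructor
      · exact fun hx => ⟨_, hlog x hx⟩
      · rintro ⟨ζ, rfl⟩
        exact hpts ζ
    rw [this]
    exact isPreconnected_range hpt
  have hIs : ID s = s := ID_ax σ
  have hIf : ∀ x ≠ s, ID (f x) ≠ s := fun x hx e =>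
    hx (hrev.injective (ID_injective (by rw [e, hfix, hIs])))
  have hrefl : ∀ x ≠ s, (L s (ID (f x))).im = (L s x).im := by
    have hexp : ∀ x ∈ ({s}ᶜ : Set disk),
        Complex.exp (L s (ID (f x)) + (starRingEnd ℂ) (L s x)) = 1 := by
      intro x hx
      have e1 := hL.exp_mul s x (Ne.symm hx)
      have e2 := hL.exp_mul s (ID (f x)) (hIf x hx).symm
      have e3 : ∀ y, cx (ID y) - cx s = -(starRingEnd ℂ) (cx y - cx s) := fun y => by
        conv_lhs => rw [← hIs]
        rw [cx_ID, cx_ID, map_sub]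
        ring
      rw [hrev, hfix, e3, e3] at e2
      rw [hfix] at e1
      rw [← e1, map_mul, ← Complex.exp_conj] at e2
      have hne : (starRingEnd ℂ) (cx x - cx s) ≠ 0 :=
        (map_ne_zero _).2 (cx_sub_ne_zero (Ne.symm hx))
      rw [Complex.exp_add]
      apply mul_right_cancel₀ hne
      linear_combination -e2
    have hcont : ContinuousOn (fun x => L s (ID (f x)) + (starRingEnd ℂ) (L s x)) {s}ᶜ := by
      refine ContinuousOn.add ?_ (Complex.continuous_conj.comp_continuousOn hLs)
      exact hLs.comp (continuous_ID.comp hf).continuousOn fun x hx => hIf x hx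
    have hconst : ∀ x ≠ s, ∀ y ≠ s, L s (ID (f x)) + (starRingEnd ℂ) (L s x) =
        L s (ID (f y)) + (starRingEnd ℂ) (L s y) := fun x hx y hy =>
      hconn.eq_of_exp_eq_one hcont hexp hx hy
    have hIw : ID w ≠ s := by simpa [hfw] using hIf w hw
    have hfIw : f (ID w) = ID w := by simpa [hfw] using hrev w
    intro x hx
    have e1 := congrArg Complex.im (hconst x hx w hw)
    have e2 := congrArg Complex.im (hconst (ID w) hIw w hw)
    rw [hfw, hLw] at e1 e2
    rw [hfIw, ID_ID, hLw] at e2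
    simp only [Complex.add_im, Complex.conj_im, Complex.zero_im] at e1 e2
    linarith
  have hhit : ∀ ζ (k : ℤ), ζ.im + (L s (pt ζ)).im = 2 * Real.pi * k + Real.pi →
      ∃ t ∈ Ioc σ 1, f (pt ζ) = ax t := by
    intro ζ k h
    obtain ⟨m, hm, e⟩ := hpolar ζ
    have e1 := hL.exp_mul s (pt ζ) (hpts ζ).symm
    rw [e, hfix] at e1
    have e2 : L s (pt ζ) + ζ = (((L s (pt ζ)).re + ζ.re : ℝ) : ℂ) + Real.pi * Complex.I +
        k * (2 * Real.pi * Complex.I) := by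
      apply Complex.ext
      · simp
      · simp
        linarith
    have e3 : Complex.exp (L s (pt ζ)) * Complex.exp ζ =
        -((Real.exp ((L s (pt ζ)).re + ζ.re) : ℝ) : ℂ) := by
      rw [← Complex.exp_add, e2, Complex.exp_add, Complex.exp_int_mul_two_pi_mul_I,
        Complex.exp_add, Complex.exp_pi_mul_I, Complex.ofReal_exp]
      ring
    refine eq_ax_of_sub hσ (r := m * Real.exp ((L s (pt ζ)).re + ζ.re)) (by positivity) ?_
    rw [← hs, ← e1]
    push_cast
    rw [← Complex.ofReal_add, ← Complex.ofReal_exp]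
    linear_combination (-(m : ℂ) * Complex.I) * e3
  have hζ : ∀ t ∈ Ioc σ 1, ∃ ζ : ℂ, ζ.im = Real.pi ∧ pt ζ = ax t := by
    intro t ht
    have htI : t ∈ Icc (-1 : ℝ) 1 := ⟨hσ.1.le.trans ht.1.le, ht.2⟩
    refine ⟨_, ?_, hlog (ax t) fun e => ht.1.ne' (ax_inj htI hσI e)⟩
    have e : Complex.I * (cx (ax t) - cx s) = ((-(t - σ) : ℝ) : ℂ) := by
      rw [cx_ax htI, hs, cx_ax hσI]
      push_cast
      linear_combination ((t : ℂ) - σ) * Complex.I_mul_I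
    rw [e, Complex.log_im, Complex.arg_ofReal_of_neg]
    linarith [ht.1]
  have havoid : ∀ t ∈ Ioo σ 1, ∀ k : ℤ, (L s (ax t)).im ≠ 2 * Real.pi * k := by
    intro t ht k h
    obtain ⟨ζ, h1, h2⟩ := hζ t (Ioo_subset_Ioc_self ht)
    obtain ⟨u, hu, e⟩ := hhit ζ k (by rw [h1, h2, h]; ring)
    rw [h2] at e
    obtain ⟨r, hr, hfr⟩ := exists_fixed_axis hL hf hrev e
    have hr' : r ∈ Ioc σ 1 := ordConnected_Ioc.uIcc_subset (Ioo_subset_Ioc_self ht) hu hr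
    rcases hr'.2.lt_or_eq with h3 | rfl
    · exact hno r ⟨hr'.1, h3⟩ hfr
    · have hu1 : u = 1 := by
        rcases mem_uIcc.1 hr with h4 | h4
        · exact le_antisymm hu.2 h4.2
        · exact absurd ht.2 (not_lt.2 h4.2)
      rw [hu1] at e
      have := ax_inj ⟨hσ.1.le.trans ht.1.le, ht.2.le⟩ (by norm_num)
        (hrev.injective (e.trans hfr.symm))
      exact ht.2.ne this
  have hφax : ContinuousOn (fun t => (L s (ax t)).im) (Ioc σ 1) := by
    refine Complex.continuous_im.comp_continuousOn (hLs.comp continuous_ax.continuousOn ?_)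
    exact fun t ht e => ht.1.ne' (ax_inj ⟨hσ.1.le.trans ht.1.le, ht.2⟩ hσI e)
  obtain ⟨t₀, ht₀⟩ : (Ioo σ 1).Nonempty := nonempty_Ioo.2 hσ.2
  set j : ℤ := ⌊(L s (ax t₀)).im / (2 * Real.pi)⌋ with hj
  have hj1 : 2 * Real.pi * j ≤ (L s (ax t₀)).im := by
    have := Int.floor_le ((L s (ax t₀)).im / (2 * Real.pi))
    rw [le_div_iff₀ (by positivity)] at this
    linarith
  have hj2 : (L s (ax t₀)).im < 2 * Real.pi * j + 2 * Real.pi := by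
    have := Int.lt_floor_add_one ((L s (ax t₀)).im / (2 * Real.pi))
    rw [div_lt_iff₀ (by positivity)] at this
    linarith
  have hopen : ∀ t ∈ Ioo σ 1, (L s (ax t)).im ∈
      Ioo (2 * Real.pi * j) (2 * Real.pi * j + 2 * Real.pi) := by
    intro t ht
    have hc := hφax.mono Ioo_subset_Ioc_self
    constructor
    · exact isPreconnected_Ioo.lt_of_ne hc (fun u hu => havoid u hu j)
        ⟨t₀, ht₀, hj1.lt_of_ne (havoid t₀ ht₀ j).symm⟩ ht
    · refine isPreconnected_Ioo.gt_of_ne hc (fun u hu h => havoid u hu (j + 1) ?_)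
        ⟨t₀, ht₀, hj2⟩ ht
      rw [h]
      push_cast
      ring
  have hclosed : ∀ t ∈ Ioc σ 1, (L s (ax t)).im ∈
      Icc (2 * Real.pi * j) (2 * Real.pi * j + 2 * Real.pi) := by
    intro t ht
    have h1 : t ∈ closure (Ioo σ 1) := by
      rw [closure_Ioo hσ.2.ne]
      exact Ioc_subset_Icc_self ht
    have h2 := ((hφax t ht).mono Ioo_subset_Ioc_self).mem_closure_image h1
    refine closure_minimal ?_ isClosed_Icc h2
    rintro _ ⟨u, hu, rfl⟩
    exact Ioo_subset_Icc_self (hopen u hu)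
  have hF : Continuous fun ζ : ℂ => ζ.im + (L s (pt ζ)).im := by
    refine Complex.continuous_im.add (Complex.continuous_im.comp ?_)
    exact hLs.comp_continuous hpt hpts
  obtain ⟨ζ₀, hζ₀, hpζ₀⟩ := hζ t₀ (Ioo_subset_Ioc_self ht₀)
  have hback : ∀ ζ (k : ℤ), ζ.im + (L s (pt ζ)).im = 2 * Real.pi * k + Real.pi →
      (2 * Real.pi * k + Real.pi - ζ.im) ∈
        Icc (2 * Real.pi * j) (2 * Real.pi * j + 2 * Real.pi) := by
    intro ζ k h
    obtain ⟨t, ht, e⟩ := hhit ζ k h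
    have := hrefl _ (hpts ζ)
    rw [e, ID_ax] at this
    rw [← h, add_sub_cancel_left, ← this]
    exact hclosed t ht
  have hupper : ∀ ζ : ℂ, ζ.im < Real.pi →
      ζ.im + (L s (pt ζ)).im < 2 * Real.pi * j + 3 * Real.pi := by
    intro ζ h
    refine (convex_halfSpace_im_lt Real.pi).isPreconnected.gt_of_ne hF.continuousOn
      (fun ξ hξ e => ?_) ⟨ζ₀ - 2 * Real.pi * Complex.I, ?_, ?_⟩ h
    · have := (hback ξ (j + 1) (by rw [e]; push_cast; ring)).2
      push_cast at this
      have h2 : ξ.im < Real.pi := hξ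
      linarith
    · simp [hζ₀]
      linarith
    · rw [hper, hpζ₀]
      simp [hζ₀]
      linarith
  have hlower : ∀ ζ : ℂ, -Real.pi < ζ.im →
      2 * Real.pi * j - Real.pi < ζ.im + (L s (pt ζ)).im := by
    intro ζ h
    refine (convex_halfSpace_im_gt (-Real.pi)).isPreconnected.lt_of_ne hF.continuousOn
      (fun ξ hξ e => ?_) ⟨ζ₀, ?_, ?_⟩ h
    · have := (hback ξ (j - 1) (by rw [e]; push_cast; ring)).1
      push_cast at this
      have h2 : -Real.pi < ξ.im := hξ
      linarith
    · simp [hζ₀]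
      linarith
    · rw [hpζ₀, hζ₀]
      linarith
  have hall : ∀ x ≠ s, angleAt s x < Real.pi → angleAt s x + (L s x).im ∈
      Ioo (2 * Real.pi * j - Real.pi) (2 * Real.pi * j + 3 * Real.pi) := by
    intro x hx hlt
    have h1 := hupper (Complex.log (Complex.I * (cx x - cx s)))
    have h2 := hlower (Complex.log (Complex.I * (cx x - cx s)))
    rw [hlog x hx, Complex.log_im] at h1 h2
    exact ⟨h2 (Complex.neg_pi_lt_arg _), h1 hlt⟩
  refine ⟨j, ?_, hopen, hall⟩
  have hbound : (-2 : ℝ) < j ∧ (j : ℝ) < 1 := by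
    rcases (Complex.arg_le_pi (Complex.I * (cx w - cx s))).lt_or_eq with h | h
    · have h1 := hall w hw h
      have h2 := Complex.neg_pi_lt_arg (Complex.I * (cx w - cx s))
      rw [hLw] at h1
      simp only [angleAt, Complex.zero_im, add_zero, mem_Ioo] at h1
      constructor <;> nlinarith
    · obtain ⟨hre, him⟩ := Complex.arg_eq_pi_iff.1 h
      obtain ⟨t, ht, rfl⟩ := eq_ax_of_sub hσ (y := w)
        (r := -(Complex.I * (cx w - cx s)).re) (by linarith) (by
          rw [← hs]
          apply Complex.ext
          · simpa using him
          · simp)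
      have h1 := hclosed t ht
      rw [hLw, Complex.zero_im] at h1
      constructor <;> nlinarith [h1.1, h1.2]
  have h1 : -2 < j := by exact_mod_cast hbound.1
  have h2 : j < 1 := by exact_mod_cast hbound.2
  omega

lemma angleAt_lt_pi {s x : disk} (hs : s.1.1 = 0) (hx : x.1.1 ≠ 0) : angleAt s x < Real.pi := by
  refine lt_of_le_of_ne (Complex.arg_le_pi _) fun h => hx ?_
  simpa [cx, hs] using (Complex.arg_eq_pi_iff.1 h).2

lemma measurable_angleAt (s : disk) : Measurable (angleAt s) := by
  have h : Continuous fun x => Complex.I * (cx x - cx s) := by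
    have := continuous_cx
    fun_prop
  exact Complex.measurable_arg.comp h.measurable

lemma integral_ne_zero_of_pos_on_open {V : disk → ℝ} (hVint : Integrable V area)
    (hnn : 0 ≤ᵐ[area] V) {O : Set disk} (hO : IsOpen O) (hne : O.Nonempty)
    (hpos : ∀ x ∈ O, 0 < V x) : ∫ x, V x ∂area ≠ 0 := by
  intro h0
  have hz := (integral_eq_zero_iff_of_nonneg_ae hnn hVint).1 h0
  refine (area_pos_of_isOpen hO hne).ne' (measure_mono_null (fun x hx => ?_) hz)
  exact ne_of_gt (hpos x hx)

/-- On the two sides of the branch cut the angle is close to `π` and `-π`. -/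
lemma exists_nhds_angleAt {σ t : ℝ} (hσ : σ ∈ Ioo (-1) 1) (ht : t ∈ Ioo σ 1) {ε : ℝ} (hε : 0 < ε) :
    ∃ O : Set disk, IsOpen O ∧ ax t ∈ O ∧ ∀ x ∈ O,
      (0 < x.1.1 → Real.pi - ε < angleAt (ax σ) x) ∧
      (x.1.1 < 0 → angleAt (ax σ) x < -Real.pi + ε) := by
  have htI : t ∈ Icc (-1 : ℝ) 1 := ⟨hσ.1.le.trans ht.1.le, ht.2.le⟩
  have e : Complex.I * (cx (ax t) - cx (ax σ)) = ((-(t - σ) : ℝ) : ℂ) := by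
    rw [cx_ax htI, cx_ax (Ioo_subset_Icc_self hσ)]
    push_cast
    linear_combination ((t : ℂ) - σ) * Complex.I_mul_I
  set c : ℂ := ((-(t - σ) : ℝ) : ℂ) with hc
  have hre : c.re < 0 := by
    rw [hc, Complex.ofReal_re]
    linarith [ht.1]
  have h1 := eventually_nhdsWithin_iff.1
    ((Complex.tendsto_arg_nhdsWithin_im_nonneg_of_re_neg_of_im_zero hre
      (Complex.ofReal_im _)).eventually (lt_mem_nhds (sub_lt_self Real.pi hε)))
  have h2 := eventually_nhdsWithin_iff.1
    ((Complex.tendsto_arg_nhdsWithin_im_neg_of_re_neg_of_im_zero hre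
      (Complex.ofReal_im _)).eventually (gt_mem_nhds (lt_add_of_pos_right (-Real.pi) hε)))
  have hcont : Continuous fun x => Complex.I * (cx x - cx (ax σ)) := by
    have := continuous_cx
    fun_prop
  have h3 := (hcont.tendsto (ax t)).eventually (p := fun z => _ ∧ _) (by
    rw [e]
    exact h1.and h2)
  obtain ⟨O, hO, hOo, hmem⟩ := eventually_nhds_iff.1 h3
  refine ⟨O, hOo, hmem, fun x hx => ⟨fun hpos => (hO x hx).1 ?_, fun hneg => (hO x hx).2 ?_⟩⟩
  · have : 0 ≤ x.1.1 := hpos.le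
    simpa [cx, ax] using this
  · simpa [cx, ax] using hneg

/-- Under an area preserving reversible map, if no odd iterate has a fixed point on the open axis
segment above a fixed axis point, that axis point is the only fixed point. -/
lemma eq_of_fixed_of_zero {f : disk → disk} {L : disk → disk → ℂ} (hL : AngleLift f L)
    (hf : Continuous f) (hrev : Rev f) (hmp : MeasurePreserving f area area)
    {σ : ℝ} (hσ : σ ∈ Ioo (-1) 1) (hfix : f (ax σ) = ax σ)
    (hno : ∀ m, Odd m → ∀ t ∈ Ioo σ 1, f^[m] (ax t) ≠ ax t) {w : disk}
    (hfw : f w = w) (hLw : L (ax σ) w = 0) : w = ax σ := by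
  by_contra hw
  set s := ax σ with hs
  have hpi := Real.pi_pos
  let φ : disk → ℝ := fun x => (L s x).im
  have hae : ∀ᵐ x ∂area, x.1.1 ≠ 0 := measure_mono_null (fun x hx => not_not.1 hx) area_axis
  have hxs : ∀ x : disk, x.1.1 ≠ 0 → x ≠ s := fun x hx e => hx (by rw [e]; rfl)
  have hbound : ∀ m, Odd m → ∀ x : disk, x.1.1 ≠ 0 →
      |∑ i ∈ Finset.range m, φ (f^[i] x)| ≤ 4 * Real.pi := by
    intro m hm x hx
    have hLm := hL.iterate hf hrev.injective m
    have hsm : ∀ i, f^[i] s = s := fun i => Function.iterate_fixed hfix i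
    have hwm : ∀ i, f^[i] w = w := fun i => Function.iterate_fixed hfw i
    obtain ⟨j, hj, -, h⟩ := angle_bounds hLm (hf.iterate m) (hrev.iterate m) hσ (hsm m)
      (hno m hm) hw (hwm m) (by
        refine Finset.sum_eq_zero fun i _ => ?_
        rw [← hs, hsm, hwm, hLw])
    have h1 := h x (hxs x hx) (angleAt_lt_pi rfl hx)
    have h2 := angleAt_lt_pi (s := s) rfl hx
    have h3 : -Real.pi < angleAt s x := Complex.neg_pi_lt_arg _
    simp only [← hs, hsm, Complex.im_sum] at h1
    change angleAt s x + ∑ i ∈ Finset.range m, φ (f^[i] x) ∈ _ at h1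
    rw [abs_le]
    rcases hj with rfl | rfl <;> push_cast at h1 <;> constructor <;> linarith [h1.1, h1.2]
  have hφc : ContinuousOn φ {s}ᶜ := by
    have hc : Continuous fun x : disk => (s, x) := by fun_prop
    exact Complex.continuous_im.comp_continuousOn
      (hL.continuousOn.comp hc.continuousOn fun x hx e => hx e.symm)
  have hφm : Measurable φ := measurable_of_continuousOn_compl_singleton s hφc
  have hφi : Integrable φ area := by
    refine Integrable.of_bound hφm.aestronglyMeasurable (4 * Real.pi) ?_
    filter_upwards [hae] with x hx
    simpa using hbound 1 odd_one x hx
  have hcomp : ∀ i, ∫ x, φ (f^[i] x) ∂area = ∫ x, φ x ∂area := by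
    intro i
    have h := hmp.iterate i
    conv_rhs => rw [← h.map_eq]
    exact (integral_map h.measurable.aemeasurable hφm.aestronglyMeasurable).symm
  have hsum : ∀ m : ℕ, Odd m → |(m : ℝ) * ∫ x, φ x ∂area| ≤ 4 * Real.pi * area.real univ := by
    intro m hm
    have h1 : ∫ x, ∑ i ∈ Finset.range m, φ (f^[i] x) ∂area = m * ∫ x, φ x ∂area := by
      rw [integral_finsetSum]
      · simp [hcomp]
      · exact fun i _ => (hmp.iterate i).integrable_comp_of_integrable hφi
    rw [← h1, ← Real.norm_eq_abs]
    refine norm_integral_le_of_norm_le_const ?_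
    filter_upwards [hae] with x hx
    exact hbound m hm x hx
  have hzero : ∫ x, φ x ∂area = 0 := by
    by_contra hne
    have hpos := abs_pos.2 hne
    obtain ⟨n, hn⟩ := exists_nat_gt (4 * Real.pi * area.real univ / |∫ x, φ x ∂area|)
    rw [div_lt_iff₀ hpos] at hn
    have h1 := hsum (2 * n + 1) (odd_two_mul_add_one n)
    rw [abs_mul, abs_of_nonneg (Nat.cast_nonneg _)] at h1
    push_cast at h1
    have h2 : (0 : ℝ) ≤ n * |∫ x, φ x ∂area| := by positivity
    nlinarith
  let U : disk → ℝ := fun x => angleAt s x + φ x - angleAt s (f x)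
  have hθi : Integrable (angleAt s) area := by
    refine Integrable.of_bound (measurable_angleAt s).aestronglyMeasurable Real.pi ?_
    exact Filter.Eventually.of_forall fun x => Complex.abs_arg_le_pi _
  have hθf : Integrable (fun x => angleAt s (f x)) area := hmp.integrable_comp_of_integrable hθi
  have hUi : Integrable U area := (hθi.add hφi).sub hθf
  have hU0 : ∫ x, U x ∂area = 0 := by
    have h1 : ∫ x, angleAt s (f x) ∂area = ∫ x, angleAt s x ∂area := by
      conv_rhs => rw [← hmp.map_eq]
      exact (integral_map hmp.measurable.aemeasurable
        (measurable_angleAt s).aestronglyMeasurable).symm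
    change ∫ x, angleAt s x + φ x - angleAt s (f x) ∂area = 0
    have hadd : Integrable (fun x => angleAt s x + φ x) area := hθi.add hφi
    rw [integral_sub hadd hθf, integral_add hθi hφi, h1, hzero]
    ring
  have hUint : ∀ x ≠ s, ∃ n : ℤ, U x = 2 * Real.pi * n := by
    intro x hx
    have hfx : f x ≠ s := fun e => hx (hrev.injective (e.trans hfix.symm))
    have h1 : Complex.exp (Complex.log (Complex.I * (cx x - cx s)) + L s x) =
        Complex.exp (Complex.log (Complex.I * (cx (f x) - cx s))) := by
      rw [Complex.exp_add,
        Complex.exp_log (mul_ne_zero Complex.I_ne_zero (cx_sub_ne_zero hx.symm)),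
        Complex.exp_log (mul_ne_zero Complex.I_ne_zero (cx_sub_ne_zero hfx.symm))]
      have := hL.exp_mul s x hx.symm
      rw [hfix] at this
      linear_combination Complex.I * this
    obtain ⟨n, hn⟩ := Complex.exp_eq_exp_iff_exists_int.1 h1
    refine ⟨n, ?_⟩
    have h2 := congrArg Complex.im hn
    simp only [Complex.add_im, Complex.log_im] at h2
    change angleAt s x + φ x = angleAt s (f x) + _ at h2
    simp at h2
    change angleAt s x + φ x - angleAt s (f x) = _
    rw [h2]
    ring
  obtain ⟨j, hj, hax, h⟩ := angle_bounds hL hf hrev hσ hfix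
    (fun t ht => by simpa using hno 1 odd_one t ht) hw hfw hLw
  obtain ⟨t, ht⟩ : (Ioo σ 1).Nonempty := nonempty_Ioo.2 hσ.2
  have ht' : t ∈ Ioo (-1 : ℝ) 1 := ⟨hσ.1.trans ht.1, ht.2⟩
  have hts : ax t ≠ s := fun e =>
    ht.1.ne' (ax_inj (Ioo_subset_Icc_self ht') (Ioo_subset_Icc_self hσ) e)
  have hφt := hax t ht
  change φ (ax t) ∈ _ at hφt
  have hlow : ∀ x, -Real.pi < angleAt s x := fun x => Complex.neg_pi_lt_arg _
  have hupp : ∀ x, angleAt s x ≤ Real.pi := fun x => Complex.arg_le_pi _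
  rcases hj with rfl | rfl
  · push_cast at hφt h
    have ha : 0 < φ (ax t) := by linarith [hφt.1]
    obtain ⟨O, hO, htO, hOθ⟩ := exists_nhds_angleAt hσ ht (half_pos ha)
    have hO' : IsOpen ({s}ᶜ ∩ φ ⁻¹' Ioi (φ (ax t) / 2)) :=
      hφc.isOpen_inter_preimage isOpen_compl_singleton isOpen_Ioi
    have hOO := hO.inter hO'
    obtain ⟨z, hz, hzpos⟩ := exists_mem_side hOO ht' ⟨htO, hts, half_lt_self ha⟩ one_ne_zero
    refine integral_ne_zero_of_pos_on_open hUi ?_ (hOO.inter (isOpen_side 1)) ⟨z, hz, hzpos⟩ ?_ hU0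
    · filter_upwards [hae] with x hx
      obtain ⟨n, hn⟩ := hUint x (hxs x hx)
      have h1 := (h x (hxs x hx) (angleAt_lt_pi rfl hx)).1
      have h2 : angleAt s x + φ x - angleAt s (f x) = 2 * Real.pi * n := hn
      change _ < angleAt s x + φ x at h1
      have h3 : (-1 : ℝ) < n := by nlinarith [hupp (f x)]
      have h4 : (0 : ℤ) ≤ n := by
        have : (-1 : ℤ) < n := by exact_mod_cast h3
        omega
      rw [hn]
      have : (0 : ℝ) ≤ n := by exact_mod_cast h4
      positivity
    · rintro x ⟨⟨hxO, -, hxφ⟩, hxpos⟩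
      have h1 := (hOθ x hxO).1 (by simpa using hxpos)
      have h2 : φ (ax t) / 2 < φ x := hxφ
      change 0 < angleAt s x + φ x - angleAt s (f x)
      linarith [hupp (f x)]
  · push_cast at hφt h
    have ha : 0 < -φ (ax t) := by linarith [hφt.2]
    obtain ⟨O, hO, htO, hOθ⟩ := exists_nhds_angleAt hσ ht (half_pos ha)
    have hO' : IsOpen ({s}ᶜ ∩ φ ⁻¹' Iio (φ (ax t) / 2)) :=
      hφc.isOpen_inter_preimage isOpen_compl_singleton isOpen_Iio
    have hOO := hO.inter hO'
    obtain ⟨z, hz, hzpos⟩ := exists_mem_side hOO ht'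
      ⟨htO, hts, show φ (ax t) < φ (ax t) / 2 by linarith⟩ (neg_ne_zero.2 one_ne_zero)
    refine integral_ne_zero_of_pos_on_open hUi.neg ?_ (hOO.inter (isOpen_side (-1)))
      ⟨z, hz, hzpos⟩ ?_ (by simp only [Pi.neg_apply, integral_neg, hU0, neg_zero])
    · filter_upwards [hae] with x hx
      obtain ⟨n, hn⟩ := hUint x (hxs x hx)
      have h1 := (h x (hxs x hx) (angleAt_lt_pi rfl hx)).2
      have h2 : angleAt s x + φ x - angleAt s (f x) = 2 * Real.pi * n := hn
      change angleAt s x + φ x < _ at h1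
      have h3 : (n : ℝ) < 1 := by nlinarith [hlow (f x)]
      have h4 : n ≤ (0 : ℤ) := by
        have : n < (1 : ℤ) := by exact_mod_cast h3
        omega
      rw [Pi.neg_apply, hn]
      have : (n : ℝ) ≤ 0 := by exact_mod_cast h4
      simp only [Pi.zero_apply]
      nlinarith
    · rintro x ⟨⟨hxO, -, hxφ⟩, hxpos⟩
      have h1 := (hOθ x hxO).2 (by simpa using hxpos)
      have h2 : φ x < φ (ax t) / 2 := hxφ
      change 0 < -(angleAt s x + φ x - angleAt s (f x))
      linarith [hlow (f x)]

lemma eq_of_fixed {f : disk → disk} {L : disk → disk → ℂ} (hL : AngleLift f L)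
    (hf : Continuous f) (hrev : Rev f) (hmp : MeasurePreserving f area area)
    {σ : ℝ} (hσ : σ ∈ Ioo (-1) 1) (hfix : f (ax σ) = ax σ)
    (hno : ∀ m, Odd m → ∀ t ∈ Ioo σ 1, f^[m] (ax t) ≠ ax t) {w : disk}
    (hfw : f w = w) : w = ax σ := by
  by_contra hw
  have h1 := hL.exp_mul _ _ (Ne.symm hw)
  rw [hfw, hfix] at h1
  have h2 : Complex.exp (L (ax σ) w) = 1 :=
    mul_right_cancel₀ (cx_sub_ne_zero (Ne.symm hw)) (by rw [h1, one_mul])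
  obtain ⟨n, hn⟩ := Complex.exp_eq_one_iff.1 h2
  exact hw (eq_of_fixed_of_zero (hL.sub_int n) hf hrev hmp hσ hfix hno hfw (sub_eq_zero.2 hn))

/-- **Theorem 1.3 (second part).** Every area preserving reversible homeomorphism
of the closed disk isotopic to the identity (orientation preserving) has either
precisely one interior symmetric fixed point with no other odd-periodic points,
or infinitely many interior symmetric odd-periodic points. -/
theorem dichotomy_odd_disk
    (f : disk ≃ₜ disk)
    (hrev : ∀ z : disk, f (ID z) = ID (f.symm z))
    (harea : MeasurePreserving f
      ((volume : Measure (ℝ × ℝ)).comap (Subtype.val : disk → ℝ × ℝ))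
      ((volume : Measure (ℝ × ℝ)).comap (Subtype.val : disk → ℝ × ℝ)))
    (hiso : IsotopicToId f) :
    (∃ z : disk,
        {w : disk | ∃ k : ℕ, Odd k ∧ 1 ≤ k ∧ (⇑f)^[k] w = w} = {z} ∧
        (z : ℝ × ℝ) ∈ diskInt ∧ f z = z ∧ ID z = z) ∨
    {z : disk | (z : ℝ × ℝ) ∈ diskInt ∧
        (∃ k : ℕ, Odd k ∧ 1 ≤ k ∧ (⇑f)^[k] z = z) ∧
        (∃ l : ℕ, 1 ≤ l ∧ (⇑f)^[l] z = ID z)}.Infinite := by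
  have hrev' : Rev f := fun z => by rw [hrev, f.symm_apply_apply]
  obtain ⟨L, hL⟩ := exists_angleLift f hiso
  obtain ⟨t₁, ht₁, hfix₁⟩ := exists_fixed_axis_interior hL f.continuous hrev' harea
  have hinterior : ∀ t ∈ Ioo (-1 : ℝ) 1, (ax t : ℝ × ℝ) ∈ diskInt := by
    intro t ht
    have h1 : (ax t).1 = (0, t) := Prod.ext rfl (ax_snd (Ioo_subset_Icc_self ht))
    rw [h1]
    simpa [diskInt, enorm2, Real.sqrt_sq_eq_abs, abs_lt] using ht
  let T : Set ℝ := {t | t ∈ Ioo (-1) 1 ∧ ∃ k, Odd k ∧ f^[k] (ax t) = ax t}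
  by_cases hT : T.Infinite
  · right
    have hinj : InjOn ax T := fun a ha b hb e =>
      ax_inj (Ioo_subset_Icc_self ha.1) (Ioo_subset_Icc_self hb.1) e
    refine (hT.image hinj).mono ?_
    rintro _ ⟨t, ⟨ht, k, hk, e⟩, rfl⟩
    exact ⟨hinterior t ht, ⟨k, hk, hk.pos, e⟩, k, hk.pos, by rw [e, ID_ax]⟩
  left
  refine ⟨ax t₁, ?_, hinterior t₁ ht₁, hfix₁, ID_ax t₁⟩
  refine Subset.antisymm ?_ (singleton_subset_iff.2 ⟨1, odd_one, le_rfl, hfix₁⟩)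
  rintro w ⟨k, hk, -, hw⟩
  by_contra hne
  have hTfin := not_infinite.1 hT
  have ht₁T : t₁ ∈ T := ⟨ht₁, 1, odd_one, hfix₁⟩
  obtain ⟨σ, hσT, hmax⟩ := hTfin.exists_maximal ⟨t₁, ht₁T⟩
  obtain ⟨hσ, p, hp, hσp⟩ := hσT
  have hNodd : Odd (k * p) := hk.mul hp
  have hper : ∀ z : disk, (f^[k] z = z ∨ f^[p] z = z ∨ f z = z) → f^[k * p] z = z := by
    rintro z (h | h | h)
    · exact Function.IsPeriodicPt.mul_const h p
    · exact Function.IsPeriodicPt.const_mul h k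
    · exact Function.iterate_fixed h _
  have huniq : ∀ z, f^[k * p] z = z → z = ax σ := fun z hz =>
    eq_of_fixed (hL.iterate f.continuous f.injective (k * p)) (f.continuous.iterate _)
      (hrev'.iterate _) (harea.iterate _) hσ (hper _ (Or.inr (Or.inl hσp)))
      (fun m hm t ht e => by
        rw [← Function.iterate_mul] at e
        have htT : t ∈ T := ⟨⟨hσ.1.trans ht.1, ht.2⟩, _, hNodd.mul hm, e⟩
        exact ht.1.not_ge (hmax htT ht.1.le)) hz
  exact hne ((huniq w (hper w (Or.inl hw))).trans (huniq _ (hper _ (Or.inr (Or.inr hfix₁)))).symm)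
end
end

section
/- Let f : A → A be a reversible homeomorphism of the closed annulus A which is isotopic to the identity and satisfies the boundary twist condition. Then on each of the two connected components Y₊ = {0} × [1,2] and Y₋ = {0} × [−2,−1] of Fix I_A there is an interior symmetric fixed point of f, i.e., a point z ∈ Y₊ ∩ Å (respectively z ∈ Y₋ ∩ Å) with f(z) = z. (No area preservation is assumed.) -/
open MeasureTheory Set

noncomputable section

/-- The closed annulus `A = {z : 1 ≤ |z| ≤ 2}`. -/
def annulus : Set (ℝ × ℝ) := {p | 1 ≤ enorm2 p ∧ enorm2 p ≤ 2}

/-- The open annulus `Å = {z : 1 < |z| < 2}`, the interior of `A`. -/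
def annulusInt : Set (ℝ × ℝ) := {p | 1 < enorm2 p ∧ enorm2 p < 2}

/-- The strip `S = ℝ × [0,1]`. -/
def strip : Set (ℝ × ℝ) := {p | 0 ≤ p.2 ∧ p.2 ≤ 1}

/-- The component `Y₊ = {0} × [1,2]` of `Fix I_A`. -/
def Yplus : Set (ℝ × ℝ) := {p | p.1 = 0 ∧ 1 ≤ p.2 ∧ p.2 ≤ 2}

/-- The component `Y₋ = {0} × [−2,−1]` of `Fix I_A`. -/
def Yminus : Set (ℝ × ℝ) := {p | p.1 = 0 ∧ -2 ≤ p.2 ∧ p.2 ≤ -1}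

lemma refl2_mem_annulus {p : ℝ × ℝ} (h : p ∈ annulus) : refl2 p ∈ annulus := by
  simpa [annulus, enorm2_refl2] using h

/-- The restriction `I_A` of the reflection to the closed annulus. -/
def IA : annulus → annulus := fun z => ⟨refl2 z, refl2_mem_annulus z.2⟩

lemma cover_mem_annulus {w : ℝ × ℝ} (hw : w ∈ strip) :
    ((1 + w.2) * Real.sin w.1, (1 + w.2) * Real.cos w.1) ∈ annulus := by
  obtain ⟨h0, h1⟩ := hw
  have key : enorm2 ((1 + w.2) * Real.sin w.1, (1 + w.2) * Real.cos w.1) = 1 + w.2 := by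
    have hsq : ((1 + w.2) * Real.sin w.1) ^ 2 + ((1 + w.2) * Real.cos w.1) ^ 2
        = (1 + w.2) ^ 2 := by
      nlinarith [Real.sin_sq_add_cos_sq w.1]
    simp only [enorm2]
    rw [hsq, Real.sqrt_sq (by linarith)]
  constructor <;> rw [key] <;> linarith

/-- The covering map `π : S → A`, `π(x,y) = ((1+y)·sin x, (1+y)·cos x)`. -/
def covA : strip → annulus :=
  fun w => ⟨((1 + (w : ℝ × ℝ).2) * Real.sin (w : ℝ × ℝ).1,
             (1 + (w : ℝ × ℝ).2) * Real.cos (w : ℝ × ℝ).1), cover_mem_annulus w.2⟩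

lemma mem_strip_bot (x : ℝ) : ((x, (0:ℝ)) : ℝ × ℝ) ∈ strip := by
  constructor <;> norm_num

lemma mem_strip_top (x : ℝ) : ((x, (1:ℝ)) : ℝ × ℝ) ∈ strip := by
  constructor <;> norm_num

/-- A real function on a connected space with values in `2πℤ` is constant. -/
lemma exists_eq_int_mul_two_pi {X : Type*} [TopologicalSpace X] [PreconnectedSpace X]
    [Nonempty X] {g : X → ℝ} (hg : Continuous g) (h : ∀ x, ∃ n : ℤ, g x = n * (2 * Real.pi)) :
    ∃ n : ℤ, ∀ x, g x = n * (2 * Real.pi) := by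
  choose n hn using h
  have hπ : (2 * Real.pi) ≠ 0 := by positivity
  have hc : Continuous n := by
    rw [Int.isClosedEmbedding_coe_real.isEmbedding.continuous_iff]
    have : ((fun k : ℤ => (k : ℝ)) ∘ n) = fun x => g x / (2 * Real.pi) := by
      funext x
      simp only [Function.comp_apply, hn x]
      field_simp
    rw [this]
    exact hg.div_const _
  obtain ⟨x₀⟩ := ‹Nonempty X›
  exact ⟨n x₀, fun x => by rw [hn x, PreconnectedSpace.constant ‹_› hc]⟩

/-- A continuous nonvanishing complex function on a star-convex set has a continuous logarithm. -/
lemma exists_continuous_log_of_starConvex {V : Type*} [AddCommGroup V] [Module ℝ V]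
    [TopologicalSpace V] [IsTopologicalAddGroup V] [ContinuousSMul ℝ V] {s : Set V} {c : V}
    (hc : c ∈ s) (hs : StarConvex ℝ c s) {f : s → ℂ} (hf : Continuous f) (hne : ∀ w, f w ≠ 0) :
    ∃ l : s → ℂ, Continuous l ∧ ∀ w, Complex.exp (l w) = f w := by
  have hmem : ∀ (t : unitInterval) (w : s), c + (t : ℝ) • ((w : V) - c) ∈ s := fun t w =>
    hs.add_smul_sub_mem w.2 t.2.1 t.2.2
  let contr : unitInterval × s → s := fun q => ⟨c + (q.1 : ℝ) • ((q.2 : V) - c), hmem q.1 q.2⟩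
  have hcontr : Continuous contr := by
    apply Continuous.subtype_mk
    fun_prop
  let H : C(unitInterval × s, {z : ℂ // z ≠ 0}) :=
    ⟨fun q => ⟨f (contr q), hne _⟩, (hf.comp hcontr).subtype_mk _⟩
  have h0 : ∀ w : s, H (0, w) =
      ⟨Complex.exp (ContinuousMap.const s (Complex.log (f ⟨c, hc⟩)) w), Complex.exp_ne_zero _⟩ := by
    intro w
    apply Subtype.ext
    have : contr (0, w) = ⟨c, hc⟩ := Subtype.ext (by simp [contr])
    simp [H, this, Complex.exp_log (hne _)]
  refine ⟨fun w => Complex.isCoveringMap_exp.liftHomotopy H _ h0 (1, w), by fun_prop, fun w => ?_⟩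
  have := congr_fun (Complex.isCoveringMap_exp.liftHomotopy_lifts H _ h0) (1, w)
  have h1 : contr (1, w) = w := Subtype.ext (by simp [contr])
  simpa [H, h1] using congrArg Subtype.val this

/-- There is no continuous logarithm on a circle of radius `r`. -/
lemma not_exists_periodic_log {r : ℝ} (hr : 0 < r) {l : ℝ → ℂ} (hl : Continuous l)
    (hper : l (2 * Real.pi) = l 0)
    (hexp : ∀ t : ℝ, Complex.exp (l t) = r * Complex.exp (t * Complex.I)) : False := by
  have hval : ∀ t : ℝ, ∃ n : ℤ, (l t).im - t = n * (2 * Real.pi) := by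
    intro t
    have hlog : Complex.exp (Real.log r + t * Complex.I) = Complex.exp (l t) := by
      rw [hexp, Complex.exp_add, ← Complex.ofReal_exp, Real.exp_log hr]
    obtain ⟨n, hn⟩ := Complex.exp_eq_exp_iff_exists_int.1 hlog.symm
    refine ⟨n, ?_⟩
    have := congrArg Complex.im hn
    simp at this
    linarith
  obtain ⟨n, hn⟩ := exists_eq_int_mul_two_pi
    (by fun_prop : Continuous fun t : ℝ => (l t).im - t) hval
  have h0 := hn 0
  have h1 := hn (2 * Real.pi)
  rw [hper] at h1
  linarith [Real.pi_pos]

lemma convex_strip : Convex ℝ strip :=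
  (convex_Icc (0 : ℝ) 1).linear_preimage (LinearMap.snd ℝ ℝ ℝ)

lemma nonempty_strip : Nonempty strip := ⟨⟨(0, 0), mem_strip_bot 0⟩⟩

lemma preconnectedSpace_strip : PreconnectedSpace strip :=
  isPreconnected_iff_preconnectedSpace.1 convex_strip.isPreconnected

/-- Displacement `w - w'` of two points of the strip, as a complex number. -/
def stripDiff (w w' : strip) : ℂ := ⟨w.1.1 - w'.1.1, w.1.2 - w'.1.2⟩

lemma continuous_stripDiff {X : Type*} [TopologicalSpace X] {g h : X → strip}
    (hg : Continuous g) (hh : Continuous h) : Continuous fun x => stripDiff (g x) (h x) := by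
  have : (fun x => stripDiff (g x) (h x)) = fun x =>
      (((g x).1.1 - (h x).1.1 : ℝ) : ℂ) + (((g x).1.2 - (h x).1.2 : ℝ) : ℂ) * Complex.I := by
    funext x
    apply Complex.ext <;> simp [stripDiff]
  rw [this]
  fun_prop

lemma stripDiff_eq_zero {w w' : strip} : stripDiff w w' = 0 ↔ w = w' := by
  rw [Complex.ext_iff, Subtype.ext_iff, Prod.ext_iff]
  simp [stripDiff, sub_eq_zero]

lemma stripDiff_swap (w w' : strip) : stripDiff w w' = -stripDiff w' w := by
  apply Complex.ext <;> simp [stripDiff]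

/-- The strip minus a boundary point is star-convex about the opposite boundary point. -/
lemma starConvex_strip_diff_boundary {p : ℝ × ℝ} (hp : p.2 = 0 ∨ p.2 = 1) :
    StarConvex ℝ (p.1, 1 - p.2) (strip \ {p}) := by
  intro q hq a b ha hb hab
  have hopp : ((p.1, 1 - p.2) : ℝ × ℝ) ∈ strip := by
    constructor <;> rcases hp with h | h <;> simp [h]
  refine ⟨convex_strip hopp hq.1 ha hb hab, fun heq => hq.2 ?_⟩
  obtain ⟨⟨h0, h1⟩, -⟩ := hq
  have e1 := congrArg Prod.fst (mem_singleton_iff.1 heq)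
  have e2 := congrArg Prod.snd (mem_singleton_iff.1 heq)
  simp only [Prod.fst_add, Prod.smul_fst, smul_eq_mul, Prod.snd_add, Prod.smul_snd] at e1 e2
  have ha0 : a = 0 := by
    rcases hp with h | h <;> rw [h] at e2 <;> nlinarith
  obtain rfl : b = 1 := by linarith
  subst ha0
  exact Prod.ext (by simpa using e1) (by simpa using e2)

/-- A homeomorphism of the strip preserves its boundary. -/
lemma homeomorph_strip_boundary (F : strip ≃ₜ strip) {p : strip}
    (hp : p.1.2 = 0 ∨ p.1.2 = 1) : (F p).1.2 = 0 ∨ (F p).1.2 = 1 := by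
  by_contra! hcon
  have hy0 : 0 < (F p).1.2 := lt_of_le_of_ne (F p).2.1 (Ne.symm hcon.1)
  have hy1 : (F p).1.2 < 1 := lt_of_le_of_ne (F p).2.2 hcon.2
  obtain ⟨r, hr, hr0, hr1⟩ : ∃ r : ℝ, 0 < r ∧ r ≤ (F p).1.2 ∧ r ≤ 1 - (F p).1.2 :=
    ⟨min (F p).1.2 (1 - (F p).1.2), by simp [hy0, hy1], min_le_left _ _, min_le_right _ _⟩
  have hopp : (((p.1.1, 1 - p.1.2) : ℝ × ℝ)) ∈ strip \ {p.1} := by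
    refine ⟨by constructor <;> rcases hp with h | h <;> simp [h], fun heq => ?_⟩
    have := congrArg Prod.snd (mem_singleton_iff.1 heq)
    rcases hp with h | h <;> simp [h] at this
  let incl : (strip \ {p.1} : Set (ℝ × ℝ)) → strip := fun q => ⟨q.1, q.2.1⟩
  have hincl : Continuous incl := by
    apply Continuous.subtype_mk
    fun_prop
  obtain ⟨l, hl, hexp⟩ := exists_continuous_log_of_starConvex hopp
    (starConvex_strip_diff_boundary hp)
    (f := fun q => stripDiff (F (incl q)) (F p))
    (continuous_stripDiff (F.continuous.comp hincl) continuous_const) (by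
      intro q h0
      exact q.2.2 (congrArg Subtype.val (F.injective (stripDiff_eq_zero.1 h0))))
  have hmem : ∀ t : ℝ,
      (((F p).1.1 + r * Real.cos t, (F p).1.2 + r * Real.sin t) : ℝ × ℝ) ∈ strip := by
    intro t
    constructor
    · dsimp only
      nlinarith [Real.neg_one_le_sin t]
    · dsimp only
      nlinarith [Real.sin_le_one t]
  let circ : ℝ → strip := fun t => ⟨_, hmem t⟩
  have hcirc : Continuous circ := by
    apply Continuous.subtype_mk
    fun_prop
  have hdiff : ∀ t : ℝ, stripDiff (circ t) (F p) = r * Complex.exp (t * Complex.I) := by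
    intro t
    apply Complex.ext <;>
      simp [stripDiff, circ, Complex.exp_ofReal_mul_I_re, Complex.exp_ofReal_mul_I_im]
  have hne : ∀ t, (F.symm (circ t)).1 ∈ strip \ {p.1} := by
    refine fun t => ⟨(F.symm (circ t)).2, fun heq => ?_⟩
    have h1 : F.symm (circ t) = p := Subtype.ext heq
    have h2 : stripDiff (circ t) (F p) = 0 :=
      stripDiff_eq_zero.2 (by rw [← h1, F.apply_symm_apply])
    rw [hdiff] at h2
    exact mul_ne_zero (by exact_mod_cast hr.ne') (Complex.exp_ne_zero _) h2
  refine not_exists_periodic_log hr (l := fun t => l ⟨_, hne t⟩)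
    (hl.comp ((continuous_subtype_val.comp (F.symm.continuous.comp hcirc)).subtype_mk _)) ?_ ?_
  · have : circ (2 * Real.pi) = circ 0 := Subtype.ext (by simp [circ])
    simp only [this]
  · intro t
    rw [hexp, ← hdiff]
    simp [incl]

/-- The projection of the strip onto its closed left half. -/
def leftProj (w : strip) : strip := ⟨(min w.1.1 0, w.1.2), w.2⟩

lemma continuous_leftProj : Continuous leftProj := by
  apply Continuous.subtype_mk
  fun_prop

lemma leftProj_eq_self {w : strip} (h : w.1.1 ≤ 0) : leftProj w = w :=
  Subtype.ext (Prod.ext (min_eq_left h) rfl)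

/-- If an involution of the strip has fixed points on both sides of the segment `x = 0`,
then it has one on that segment. -/
lemma exists_fixed_of_involution {G : strip → strip} (hG : Continuous G)
    (hinv : ∀ w, G (G w) = w) {p q : strip} (hp : G p = p) (hp0 : p.1.1 < 0)
    (hq : G q = q) (hq0 : 0 < q.1.1) : ∃ w : strip, w.1.1 = 0 ∧ G w = w := by
  classical
  by_contra! hno
  -- The displacement of `G`, frozen on the right half; it vanishes only at fixed points on the left.
  let a : strip → ℂ := fun w => stripDiff (leftProj w) (G (leftProj w))
  have ha : Continuous a := continuous_stripDiff continuous_leftProj (hG.comp continuous_leftProj)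
  have ha0 : ∀ w, ¬ (G w = w ∧ w.1.1 ≤ 0) → a w ≠ 0 := by
    intro w hw h0
    have hfix := (stripDiff_eq_zero.1 h0).symm
    rcases le_total w.1.1 0 with h | h
    · rw [leftProj_eq_self h] at hfix
      exact hw ⟨hfix, h⟩
    · exact hno (leftProj w) (min_eq_right h) hfix
  let E : strip → ℂ := fun w => if G w = w ∧ w.1.1 ≤ 0 then -1 else a (G w) / a w
  have hEpos : ∀ {w}, G w = w ∧ w.1.1 ≤ 0 → E w = -1 := fun h => if_pos h
  have hEneg : ∀ {w}, ¬ (G w = w ∧ w.1.1 ≤ 0) → E w = a (G w) / a w := fun h => if_neg h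
  have hG0 : ∀ {w}, ¬ (G w = w ∧ w.1.1 ≤ 0) → ¬ (G (G w) = G w ∧ (G w).1.1 ≤ 0) := by
    intro w hw h
    rw [hinv] at h
    exact hw ⟨h.1.symm, h.1 ▸ h.2⟩
  have hE0 : ∀ w, E w ≠ 0 := by
    intro w
    by_cases hw : G w = w ∧ w.1.1 ≤ 0
    · rw [hEpos hw]
      norm_num
    · rw [hEneg hw]
      exact div_ne_zero (ha0 _ (hG0 hw)) (ha0 _ hw)
  have hEG : ∀ w, E w * E (G w) = 1 := by
    intro w
    by_cases hw : G w = w ∧ w.1.1 ≤ 0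
    · rw [hw.1, hEpos hw]
      norm_num
    · rw [hEneg hw, hEneg (hG0 hw), hinv]
      have h1 := ha0 _ hw
      have h2 := ha0 _ (hG0 hw)
      field_simp
  have hclosed : IsClosed {w : strip | G w = w ∧ w.1.1 ≤ 0} :=
    (isClosed_eq hG continuous_id).inter
      (isClosed_le (by fun_prop : Continuous fun w : strip => w.1.1) continuous_const)
  have hE : Continuous E := by
    rw [continuous_iff_continuousAt]
    intro w
    by_cases hw : G w = w ∧ w.1.1 ≤ 0
    · have hlt : w.1.1 < 0 := lt_of_le_of_ne hw.2 fun h => hno w h hw.1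
      have h1 : ∀ᶠ z : strip in nhds w, z.1.1 < 0 :=
        (isOpen_lt (by fun_prop : Continuous fun z : strip => z.1.1) continuous_const).mem_nhds hlt
      have h2 : ∀ᶠ z : strip in nhds w, (G z).1.1 < 0 :=
        (isOpen_lt (by fun_prop : Continuous fun z : strip => (G z).1.1)
          continuous_const).mem_nhds (by simpa [hw.1] using hlt)
      refine (continuousAt_const (y := (-1 : ℂ))).congr ?_
      filter_upwards [h1, h2] with z hz1 hz2
      by_cases hz : G z = z ∧ z.1.1 ≤ 0
      · rw [hEpos hz]
      · have hne := ha0 _ hz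
        rw [hEneg hz]
        simp only [a, leftProj_eq_self hz1.le, leftProj_eq_self hz2.le, hinv] at hne ⊢
        rw [stripDiff_swap (G z) z, neg_div, div_self hne]
    · refine ContinuousAt.congr (f := fun z => a (G z) / a z)
        ((ha.comp hG).continuousAt.div ha.continuousAt (ha0 _ hw)) ?_
      filter_upwards [hclosed.isOpen_compl.mem_nhds hw] with z hz
      exact (hEneg hz).symm
  obtain ⟨l, hl, hexp⟩ :=
    exists_continuous_log_of_starConvex p.2 (convex_strip.starConvex p.2) hE hE0
  have hval : ∀ w, ∃ n : ℤ, l w + l (G w) = n * (2 * Real.pi * Complex.I) := by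
    intro w
    apply Complex.exp_eq_one_iff.1
    rw [Complex.exp_add, hexp, hexp, hEG]
  have hsum : l p + l (G p) = l q + l (G q) := by
    have := preconnectedSpace_strip
    have := nonempty_strip
    obtain ⟨n, hn⟩ := exists_eq_int_mul_two_pi
      (by fun_prop : Continuous fun w => (l w + l (G w)).im) (fun w => by
        obtain ⟨n, hn⟩ := hval w
        exact ⟨n, by rw [hn]; simp⟩)
    obtain ⟨i, hi⟩ := hval p
    obtain ⟨j, hj⟩ := hval q
    apply Complex.ext
    · rw [hi, hj]
      simp
    · rw [hn p, hn q]
  rw [hp, hq] at hsum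
  have hpq : E p = E q := by
    rw [← hexp, ← hexp, show l p = l q by linear_combination hsum / 2]
  have hq' : ¬ (G q = q ∧ q.1.1 ≤ 0) := fun h => absurd h.2 (not_le.2 hq0)
  rw [hEpos ⟨hp, hp0.le⟩, hEneg hq', hq, div_self (ha0 q hq')] at hpq
  norm_num at hpq

/-- The reflection `(x,y) ↦ (-x,y)` of the strip. -/
def reflStrip (w : strip) : strip := ⟨(-w.1.1, w.1.2), w.2⟩

/-- The translation `(x,y) ↦ (x + c,y)` of the strip. -/
def shiftStrip (c : ℝ) : strip ≃ₜ strip where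
  toFun w := ⟨(w.1.1 + c, w.1.2), w.2⟩
  invFun w := ⟨(w.1.1 - c, w.1.2), w.2⟩
  left_inv w := Subtype.ext (by simp)
  right_inv w := Subtype.ext (by simp)
  continuous_toFun := by
    apply Continuous.subtype_mk
    fun_prop
  continuous_invFun := by
    apply Continuous.subtype_mk
    fun_prop

lemma continuous_reflStrip : Continuous reflStrip := by
  apply Continuous.subtype_mk
  fun_prop

/-- A reversible homeomorphism of the strip with boundary twist has a fixed point in the interior
of the segment `x = 0`. -/
lemma exists_symmetric_fixed_strip (F : strip ≃ₜ strip)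
    (hrev : ∀ w, F (reflStrip (F (reflStrip w))) = w)
    (hbot : ∀ w : strip, w.1.2 = 0 → (F w).1.1 < w.1.1)
    (htop : ∀ w : strip, w.1.2 = 1 → w.1.1 < (F w).1.1) :
    ∃ w : strip, w.1.1 = 0 ∧ 0 < w.1.2 ∧ w.1.2 < 1 ∧ F w = w := by
  have hrev' : ∀ w, F (reflStrip (F w)) = reflStrip w := fun w => by
    simpa [reflStrip] using hrev (reflStrip w)
  have hbot0 : ∀ w : strip, w.1.2 = 0 → (F w).1.2 = 0 := by
    intro w hw
    refine (homeomorph_strip_boundary F (Or.inl hw)).resolve_right fun h => ?_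
    have h1 := htop (reflStrip (F w)) h
    rw [hrev'] at h1
    have h2 := hbot w hw
    simp only [reflStrip] at h1
    linarith
  have htop1 : ∀ w : strip, w.1.2 = 1 → (F w).1.2 = 1 := by
    intro w hw
    refine (homeomorph_strip_boundary F (Or.inr hw)).resolve_left fun h => ?_
    have h1 := hbot (reflStrip (F w)) h
    rw [hrev'] at h1
    have h2 := htop w hw
    simp only [reflStrip] at h1
    linarith
  -- On each boundary line the involution `F ∘ R` has a fixed point.
  have hfix : ∀ (y : ℝ) (hy : ∀ x : ℝ, ((x, y) : ℝ × ℝ) ∈ strip),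
      (∀ x, (F ⟨(x, y), hy x⟩).1.2 = y) →
      ∃ x : ℝ, F (reflStrip ⟨(x, y), hy x⟩) = ⟨(x, y), hy x⟩ := by
    intro y hy hline
    let φ : ℝ → ℝ := fun x => (F ⟨(-x, y), hy (-x)⟩).1.1 - x
    have hφ : Continuous φ := by
      have : Continuous fun x : ℝ => (⟨(-x, y), hy (-x)⟩ : strip) := by
        apply Continuous.subtype_mk
        fun_prop
      fun_prop
    have himage : F ⟨(0, y), hy 0⟩ = ⟨((F ⟨(0, y), hy 0⟩).1.1, y), hy _⟩ :=
      Subtype.ext (Prod.ext rfl (hline 0))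
    have hneg : φ (φ 0) = -φ 0 := by
      have h0 : φ 0 = (F ⟨(0, y), hy 0⟩).1.1 := by simp [φ]
      have h1 := hrev' ⟨(0, y), hy 0⟩
      rw [himage, ← h0] at h1
      have h2 := congrArg (fun w : strip => w.1.1) h1
      simp only [reflStrip] at h2
      simp only [φ] at h2 ⊢
      rw [h2]
      ring
    obtain ⟨x, hx⟩ : (0 : ℝ) ∈ range φ := by
      rcases le_total (φ 0) 0 with h | h
      · exact mem_range_of_exists_le_of_exists_ge hφ ⟨0, h⟩ ⟨φ 0, by linarith⟩
      · exact mem_range_of_exists_le_of_exists_ge hφ ⟨φ 0, by linarith⟩ ⟨0, h⟩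
    exact ⟨x, Subtype.ext (Prod.ext (sub_eq_zero.1 hx) (hline (-x)))⟩
  obtain ⟨x₀, hx₀⟩ := hfix 0 mem_strip_bot fun x => hbot0 _ rfl
  obtain ⟨x₁, hx₁⟩ := hfix 1 mem_strip_top fun x => htop1 _ rfl
  obtain ⟨w, hw0, hw⟩ := exists_fixed_of_involution (G := fun w => F (reflStrip w))
    (F.continuous.comp continuous_reflStrip) hrev hx₀ (by
      have := hbot (reflStrip ⟨(x₀, 0), mem_strip_bot x₀⟩) rfl
      rw [hx₀] at this
      simp only [reflStrip] at this ⊢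
      linarith) hx₁ (by
      have := htop (reflStrip ⟨(x₁, 1), mem_strip_top x₁⟩) rfl
      rw [hx₁] at this
      simp only [reflStrip] at this ⊢
      linarith)
  have hrw : reflStrip w = w := Subtype.ext (Prod.ext (by simp [reflStrip, hw0]) rfl)
  simp only [hrw] at hw
  refine ⟨w, hw0, lt_of_le_of_ne w.2.1 fun h => ?_, lt_of_le_of_ne w.2.2 fun h => ?_, hw⟩
  · have := hbot w h.symm
    rw [hw] at this
    exact lt_irrefl _ this
  · have := htop w h
    rw [hw] at this
    exact lt_irrefl _ this

lemma enorm2_covA (w : strip) : enorm2 (covA w) = 1 + w.1.2 := by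
  have hsq : ((1 + w.1.2) * Real.sin w.1.1) ^ 2 + ((1 + w.1.2) * Real.cos w.1.1) ^ 2
      = (1 + w.1.2) ^ 2 := by
    linear_combination (1 + w.1.2) ^ 2 * Real.sin_sq_add_cos_sq w.1.1
  simp only [enorm2, covA]
  rw [hsq, Real.sqrt_sq (by linarith [w.2.1])]

/-- Points of the strip over the same point of the annulus differ by a deck translation. -/
lemma exists_shift_of_covA_eq {w w' : strip} (h : covA w = covA w') :
    w.1.2 = w'.1.2 ∧ ∃ n : ℤ, w.1.1 - w'.1.1 = n * (2 * Real.pi) := by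
  have hy : w.1.2 = w'.1.2 := by
    have := enorm2_covA w
    rw [h, enorm2_covA] at this
    linarith
  refine ⟨hy, ?_⟩
  have hpos : 1 + w'.1.2 ≠ 0 := by linarith [w'.2.1]
  have h1 := congrArg (fun z : annulus => z.1.1) h
  have h2 := congrArg (fun z : annulus => z.1.2) h
  simp only [covA, hy] at h1 h2
  have hangle : (w.1.1 : Real.Angle) = w'.1.1 :=
    Real.Angle.cos_sin_inj (mul_left_cancel₀ hpos h2) (mul_left_cancel₀ hpos h1)
  obtain ⟨n, hn⟩ := Real.Angle.angle_eq_iff_two_pi_dvd_sub.1 hangle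
  exact ⟨n, by rw [hn]; ring⟩

lemma covA_shift (n : ℤ) (w : strip) : covA (shiftStrip (n * (2 * Real.pi)) w) = covA w := by
  apply Subtype.ext
  simp [covA, shiftStrip, Real.sin_add_int_mul_two_pi, Real.cos_add_int_mul_two_pi]

lemma covA_reflStrip (w : strip) : covA (reflStrip w) = IA (covA w) := by
  apply Subtype.ext
  simp [covA, reflStrip, IA, refl2]

/-- Two continuous maps into the strip with the same projection to the annulus differ by a
single deck translation. -/
lemma exists_shift_eq_of_covA_eq {g h : strip → strip} (hg : Continuous g) (hh : Continuous h)
    (heq : ∀ w, covA (g w) = covA (h w)) :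
    ∃ n : ℤ, ∀ w, g w = shiftStrip (n * (2 * Real.pi)) (h w) := by
  have := preconnectedSpace_strip
  have := nonempty_strip
  obtain ⟨n, hn⟩ := exists_eq_int_mul_two_pi
    (by fun_prop : Continuous fun w => (g w).1.1 - (h w).1.1)
    fun w => (exists_shift_of_covA_eq (heq w)).2
  refine ⟨n, fun w => Subtype.ext (Prod.ext ?_ (exists_shift_of_covA_eq (heq w)).1)⟩
  simp only [shiftStrip, Homeomorph.homeomorph_mk_coe, Equiv.coe_fn_mk]
  linarith [hn w]

lemma shiftStrip_shiftStrip (a b : ℝ) (w : strip) :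
    shiftStrip a (shiftStrip b w) = shiftStrip (a + b) w :=
  Subtype.ext (Prod.ext (by simp [shiftStrip]; ring) rfl)

lemma reflStrip_shiftStrip (a : ℝ) (w : strip) :
    reflStrip (shiftStrip a w) = shiftStrip (-a) (reflStrip w) :=
  Subtype.ext (Prod.ext (by simp [shiftStrip, reflStrip]; ring) rfl)

/-- A lift whose displacement is negative on the lower boundary commutes with the deck
translations. -/
lemma lift_comm_shift {f : annulus ≃ₜ annulus} {F : strip ≃ₜ strip}
    (hlift : ∀ w : strip, covA (F w) = f (covA w))
    (hbot : ∀ w : strip, w.1.2 = 0 → (F w).1.1 < w.1.1) (n : ℤ) (w : strip) :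
    F (shiftStrip (n * (2 * Real.pi)) w) = shiftStrip (n * (2 * Real.pi)) (F w) := by
  obtain ⟨m, hm⟩ := exists_shift_eq_of_covA_eq
    (F.continuous.comp (shiftStrip ((1 : ℤ) * (2 * Real.pi))).continuous) F.continuous fun w => by
      simp only [Function.comp_apply, hlift, covA_shift]
  have hstep : ∀ (k : ℤ) (w : strip), F (shiftStrip (k * (2 * Real.pi)) w) =
      shiftStrip ((m * k : ℤ) * (2 * Real.pi)) (F w) := by
    intro k
    induction k with
    | zero => exact fun w => by simp [shiftStrip]
    | succ i ih =>
      intro w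
      have h := hm (shiftStrip (i * (2 * Real.pi)) w)
      simp only [Function.comp_apply, shiftStrip_shiftStrip] at h
      have ihw := ih w
      simp only [Int.cast_natCast] at ihw
      rw [ihw, shiftStrip_shiftStrip] at h
      convert h using 2 <;> push_cast <;> ring_nf
    | pred i ih =>
      intro w
      have h := hm (shiftStrip (((-i - 1 : ℤ) : ℝ) * (2 * Real.pi)) w)
      simp only [Function.comp_apply, shiftStrip_shiftStrip] at h
      rw [show ((1 : ℤ) : ℝ) * (2 * Real.pi) + ((-i - 1 : ℤ) : ℝ) * (2 * Real.pi) =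
        ((-i : ℤ) : ℝ) * (2 * Real.pi) by push_cast; ring, ih] at h
      apply (shiftStrip (m * (2 * Real.pi))).injective
      rw [← h, shiftStrip_shiftStrip]
      congr 2
      push_cast
      ring
  have hlt : ∀ k : ℤ, (F ⟨(0, 0), mem_strip_bot 0⟩).1.1 < (1 - m) * k * (2 * Real.pi) := by
    intro k
    have h := hbot (shiftStrip (k * (2 * Real.pi)) ⟨(0, 0), mem_strip_bot 0⟩) rfl
    rw [hstep] at h
    simp only [shiftStrip, Homeomorph.homeomorph_mk_coe, Equiv.coe_fn_mk] at h
    push_cast at h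
    linarith
  have hm1 : m = 1 := by
    by_contra hne
    obtain ⟨N, hN⟩ := exists_nat_gt (-(F ⟨(0, 0), mem_strip_bot 0⟩).1.1)
    have h := hlt (-((1 - m) * N))
    have hsq : (1 : ℝ) ≤ (1 - m) ^ 2 := by
      have : (0 : ℤ) < (1 - m) ^ 2 := by
        have : (1 - m) ≠ 0 := fun h => hne (by linarith)
        positivity
      exact_mod_cast this
    push_cast at h
    have hN0 : (0 : ℝ) ≤ N := N.cast_nonneg
    have hπ : (1 : ℝ) ≤ 2 * Real.pi := by linarith [Real.pi_gt_three]
    have h1 : (N : ℝ) ≤ (1 - m) ^ 2 * N := le_mul_of_one_le_left hN0 hsq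
    have h2 : (1 - m : ℝ) ^ 2 * N ≤ (1 - m) ^ 2 * N * (2 * Real.pi) :=
      le_mul_of_one_le_right (by positivity) hπ
    linarith
  rw [hstep, hm1, one_mul]

/-- A lift with negative displacement on the lower boundary of a reversible map of the annulus
is reversible. -/
lemma lift_reversible {f : annulus ≃ₜ annulus} {F : strip ≃ₜ strip}
    (hrev : ∀ z : annulus, f (IA z) = IA (f.symm z))
    (hlift : ∀ w : strip, covA (F w) = f (covA w))
    (hbot : ∀ w : strip, w.1.2 = 0 → (F w).1.1 < w.1.1) (w : strip) :
    F (reflStrip (F (reflStrip w))) = w := by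
  have hc : Continuous fun w => F (reflStrip w) := F.continuous.comp continuous_reflStrip
  obtain ⟨k, hk⟩ := exists_shift_eq_of_covA_eq (hc.comp hc) continuous_id fun w => by
    have hIA : ∀ z, IA (IA z) = z := fun z => Subtype.ext (by simp [IA, refl2])
    simp only [Function.comp_apply, hlift, covA_reflStrip, hrev, f.apply_symm_apply, hIA, id]
  simp only [Function.comp_apply, id] at hk
  have h : F (reflStrip (shiftStrip (k * (2 * Real.pi)) w)) = _ := hk w ▸ hk (F (reflStrip w))
  rw [reflStrip_shiftStrip, ← neg_mul, ← Int.cast_neg, lift_comm_shift hlift hbot] at h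
  have hx := congrArg (fun w : strip => w.1.1) h
  simp only [shiftStrip, Homeomorph.homeomorph_mk_coe, Equiv.coe_fn_mk] at hx
  push_cast at hx
  have h0 : (k : ℝ) * (2 * Real.pi) = 0 := by linarith
  rw [hk, h0]
  simp [shiftStrip]

/-- **Theorem 1.4 (Poincaré–Birkhoff for reversible maps).** A reversible
homeomorphism of the closed annulus isotopic to the identity satisfying the
boundary twist condition has an interior symmetric fixed point on each of the
two connected components of `Fix I_A`. No area preservation is assumed. -/
theorem poincare_birkhoff_reversible
    (f : annulus ≃ₜ annulus)
    (hrev : ∀ z : annulus, f (IA z) = IA (f.symm z))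
    (hiso : IsotopicToId f)
    (F : strip ≃ₜ strip)
    (hlift : ∀ w : strip, covA (F w) = f (covA w))
    (htwist : ∀ x : ℝ,
      ((F ⟨(x, 0), mem_strip_bot x⟩ : strip) : ℝ × ℝ).1 < x ∧
      x < ((F ⟨(x, 1), mem_strip_top x⟩ : strip) : ℝ × ℝ).1) :
    (∃ z : annulus, (z : ℝ × ℝ) ∈ Yplus ∧ (z : ℝ × ℝ) ∈ annulusInt ∧ f z = z) ∧
    (∃ z : annulus, (z : ℝ × ℝ) ∈ Yminus ∧ (z : ℝ × ℝ) ∈ annulusInt ∧ f z = z) := by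
  have hbot : ∀ w : strip, w.1.2 = 0 → (F w).1.1 < w.1.1 := by
    rintro ⟨⟨x, y⟩, hw⟩ rfl
    exact (htwist x).1
  have htop : ∀ w : strip, w.1.2 = 1 → w.1.1 < (F w).1.1 := by
    rintro ⟨⟨x, y⟩, hw⟩ rfl
    exact (htwist x).2
  have hF := lift_reversible hrev hlift hbot
  constructor
  · obtain ⟨w, hx, hy0, hy1, hw⟩ := exists_symmetric_fixed_strip F hF hbot htop
    refine ⟨covA w, ?_, ?_, by rw [← hlift, hw]⟩
    · simp only [Yplus, covA, hx, mem_ofPred_eq, Real.sin_zero, Real.cos_zero]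
      refine ⟨by ring, by linarith, by linarith⟩
    · simp only [annulusInt, mem_ofPred_eq, enorm2_covA]
      constructor <;> linarith
  · obtain ⟨w, hx, hy0, hy1, hw⟩ := exists_symmetric_fixed_strip
      (((shiftStrip Real.pi).trans F).trans (shiftStrip (-Real.pi))) (fun w => by
        simp only [Homeomorph.trans_apply]
        have hcomm := lift_comm_shift hlift hbot 1
          (reflStrip (shiftStrip Real.pi w))
        rw [reflStrip_shiftStrip, shiftStrip_shiftStrip, Int.cast_one, one_mul,
          show 2 * Real.pi + -Real.pi = Real.pi by ring] at hcomm
        rw [hcomm, shiftStrip_shiftStrip, reflStrip_shiftStrip, shiftStrip_shiftStrip,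
          show Real.pi + -(-Real.pi + 2 * Real.pi) = 0 by ring, ← reflStrip_shiftStrip]
        have h0 : ∀ v, shiftStrip 0 v = v := fun v => by simp [shiftStrip]
        rw [h0, hF, shiftStrip_shiftStrip, neg_add_cancel, h0])
      (fun w hw => by
        have := hbot (shiftStrip Real.pi w) hw
        simp only [Homeomorph.trans_apply]
        simp only [shiftStrip, Homeomorph.homeomorph_mk_coe, Equiv.coe_fn_mk] at this ⊢
        linarith)
      (fun w hw => by
        have := htop (shiftStrip Real.pi w) hw
        simp only [Homeomorph.trans_apply]
        simp only [shiftStrip, Homeomorph.homeomorph_mk_coe, Equiv.coe_fn_mk] at this ⊢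
        linarith)
    have hfix : F (shiftStrip Real.pi w) = shiftStrip Real.pi w := by
      apply (shiftStrip (-Real.pi)).injective
      rw [shiftStrip_shiftStrip, neg_add_cancel]
      simp only [Homeomorph.trans_apply] at hw
      rw [hw]
      simp [shiftStrip]
    refine ⟨covA (shiftStrip Real.pi w), ?_, ?_, by rw [← hlift, hfix]⟩
    · simp only [Yminus, covA, shiftStrip, Homeomorph.homeomorph_mk_coe, Equiv.coe_fn_mk, hx,
        mem_ofPred_eq, zero_add, Real.sin_pi, Real.cos_pi]
      refine ⟨by ring, by linarith, by linarith⟩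
    · simp only [annulusInt, mem_ofPred_eq, enorm2_covA]
      constructor <;> simp only [shiftStrip, Homeomorph.homeomorph_mk_coe, Equiv.coe_fn_mk] <;>
        linarith
end
end

section
/- Let f : ℝ² → ℝ² be an orientation preserving (equivalently, isotopic to the identity) reversible homeomorphism of the plane. If f has a symmetric periodic point (a point z with f^k(z) = z and f^ℓ(z) = I(z) for some integers k, ℓ ≥ 1), then f has a symmetric fixed point, i.e., there exists w ∈ ℝ² with f(w) = w and I(w) = w. -/
open Set

noncomputable section

/-- A self-homeomorphism `f` of the plane is isotopic to the identity:
there is a continuous `H : [0,1] × ℝ² → ℝ²` such that each `H(s,·)` is a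
homeomorphism, `H(0,·) = id` and `H(1,·) = f`. -/
def IsotopicToIdPlane (f : (ℝ × ℝ) ≃ₜ (ℝ × ℝ)) : Prop :=
  ∃ H : (Set.Icc (0:ℝ) 1) × (ℝ × ℝ) → ℝ × ℝ, Continuous H ∧
    (∀ s, ∃ e : (ℝ × ℝ) ≃ₜ (ℝ × ℝ), ∀ z, H (s, z) = e z) ∧
    (∀ z, H (⟨0, by norm_num⟩, z) = z) ∧
    (∀ z, H (⟨1, by norm_num⟩, z) = f z)

/-- A continuous nowhere vanishing `G` on the plane cannot satisfy both `G(s, b) = -G(s, a)` for all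
`s` and `G(1, t) = conj (G(0, t))` for all `t`: the variation of its argument along `{s} × [a, b]`
would be an odd multiple of `π`, independent of `s`, and opposite for `s = 0` and `s = 1`. -/
theorem false_of_antiperiodic_of_conj {G : ℝ × ℝ → ℂ} (hG : Continuous G) (hne : ∀ x, G x ≠ 0)
    {a b : ℝ} (hab : ∀ s, G (s, b) = -G (s, a))
    (hconj : ∀ t, G (1, t) = (starRingEnd ℂ) (G (0, t))) : False := by
  obtain ⟨g, ⟨-, hg⟩, -⟩ := Complex.isCoveringMapOn_exp.existsUnique_continuousMap_lifts
    (⟨G, hG⟩ : C(ℝ × ℝ, ℂ)) (a₀ := (0, 0)) (e₀ := Complex.log (G (0, 0)))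
    (Complex.exp_log (hne _)) (fun x => hne x)
  have hg (x : ℝ × ℝ) : Complex.exp (g x) = G x := congrFun hg x
  have const_of_exp {h : ℝ → ℂ} (hh : Continuous h)
      (he : ∀ s t, Complex.exp (h s) = Complex.exp (h t)) (s t : ℝ) : h s = h t :=
    Complex.isCoveringMap_exp.const_of_comp hh (fun s t => Subtype.ext (he s t)) s t
  have exp_jump (s : ℝ) : Complex.exp (g (s, b) - g (s, a)) = -1 := by
    rw [Complex.exp_sub, hg, hg, hab, neg_div, div_self (hne _)]
  have jump_eq : g (0, b) - g (0, a) = g (1, b) - g (1, a) :=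
    const_of_exp (h := fun s => g (s, b) - g (s, a)) (by fun_prop)
      (fun s t => by simp only [exp_jump]) 0 1
  have exp_conj (t : ℝ) : Complex.exp (g (1, t) - (starRingEnd ℂ) (g (0, t))) = 1 := by
    rw [Complex.exp_sub, Complex.exp_conj, hg, hg, hconj, div_self]
    simpa using hne (0, t)
  have conj_eq : g (1, b) - (starRingEnd ℂ) (g (0, b)) = g (1, a) - (starRingEnd ℂ) (g (0, a)) :=
    const_of_exp (h := fun t => g (1, t) - (starRingEnd ℂ) (g (0, t)))
      ((by fun_prop : Continuous fun t : ℝ => g (1, t)).sub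
        (Complex.continuous_conj.comp (by fun_prop)))
      (fun s t => by simp only [exp_conj]) b a
  have real_jump : (starRingEnd ℂ) (g (0, b) - g (0, a)) = g (0, b) - g (0, a) := by
    rw [map_sub]
    linear_combination -jump_eq - conj_eq
  obtain ⟨r, hr⟩ := Complex.conj_eq_iff_real.mp real_jump
  have hexp := exp_jump 0
  rw [hr, ← Complex.ofReal_exp] at hexp
  have : Real.exp r = -1 := by exact_mod_cast hexp
  linarith [Real.exp_pos r]

/-- If `f` has no fixed point on the axis of `refl2`, then it moves the axis off itself. -/
theorem fst_apply_axis_ne_zero {f : (ℝ × ℝ) ≃ₜ (ℝ × ℝ)}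
    (hrev : ∀ z, f (refl2 z) = refl2 (f.symm z)) (hiso : IsotopicToIdPlane f)
    (hfix : ∀ t : ℝ, f (0, t) ≠ (0, t)) (a : ℝ) : (f (0, a)).1 ≠ 0 := by
  intro ha
  obtain ⟨H, hH, hhom, h0, h1⟩ := hiso
  have hfa : f (0, a) = (0, (f (0, a)).2) := Prod.ext ha rfl
  generalize (f (0, a)).2 = b at hfa
  have hfb : f (0, b) = (0, a) := by
    have := hrev (0, b)
    rw [← hfa, f.symm_apply_apply] at this
    simpa [refl2, hfa] using this
  have hinv (z : ℝ × ℝ) : f (refl2 (f z)) = refl2 z := by rw [hrev, f.symm_apply_apply]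
  have hrefl : Continuous refl2 := by unfold refl2; fun_prop
  let D : ℝ × ℝ → ℝ × ℝ := fun x =>
    H (projIcc 0 1 zero_le_one x.1, refl2 (f (0, x.2))) -
      H (projIcc 0 1 zero_le_one x.1, (0, x.2))
  have hproj : Continuous (projIcc (0 : ℝ) 1 zero_le_one) := continuous_projIcc
  have hD : Continuous D := by fun_prop
  have hDne (x : ℝ × ℝ) : D x ≠ 0 := by
    obtain ⟨e, he⟩ := hhom (projIcc 0 1 zero_le_one x.1)
    intro hx
    have := e.injective (by simpa only [D, he, sub_eq_zero] using hx)
    apply hfix x.2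
    simpa [refl2, Prod.ext_iff] using this
  have hD0 (t : ℝ) : D (0, t) = refl2 (f (0, t)) - (0, t) := by
    have hp : projIcc (0 : ℝ) 1 zero_le_one 0 = ⟨0, by norm_num⟩ := projIcc_left _
    simp only [D, hp, h0]
  have hD1 (t : ℝ) : D (1, t) = (0, t) - f (0, t) := by
    have hp : projIcc (0 : ℝ) 1 zero_le_one 1 = ⟨1, by norm_num⟩ := projIcc_right _
    simp only [D, hp, h1, hinv]
    simp [refl2]
  refine false_of_antiperiodic_of_conj (G := fun x => Complex.equivRealProdCLM.symm (D x))
    (a := a) (b := b) (by fun_prop) (fun x => ?_) (fun s => ?_) (fun t => ?_)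
  · simpa using hDne x
  · have : D (s, b) = -D (s, a) := by simp [D, hfa, hfb, refl2]
    simp [this]
  · rw [hD0, hD1]
    apply Complex.ext <;> simp [refl2]

/-- If `f` maps the axis of `refl2` into the open half-plane `0 < ε x`, then it maps the closed
half-plane `0 ≤ ε x` into it. -/
theorem mapsTo_halfPlane {f : (ℝ × ℝ) ≃ₜ (ℝ × ℝ)}
    (hrev : ∀ z, f (refl2 z) = refl2 (f.symm z)) {ε : ℝ}
    (haxis : ∀ t : ℝ, 0 < ε * (f (0, t)).1) {z : ℝ × ℝ} (hz : 0 ≤ ε * z.1) :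
    0 < ε * (f z).1 := by
  by_contra! hneg
  have hconn : IsPreconnected {w : ℝ × ℝ | 0 ≤ ε * w.1} :=
    (convex_halfSpace_ge (ε • LinearMap.fst ℝ ℝ ℝ).isLinear 0).isPreconnected
  obtain ⟨w, hw, hw0⟩ := hconn.intermediate_value hz
    (show ((0, 0) : ℝ × ℝ) ∈ {w : ℝ × ℝ | 0 ≤ ε * w.1} by simp)
    (by fun_prop : Continuous fun w => ε * (f w).1).continuousOn ⟨hneg, (haxis 0).le⟩
  have hε : ε ≠ 0 := fun h => by simpa [h] using haxis 0
  have hfw : f w = (0, (f w).2) :=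
    Prod.ext ((mul_eq_zero.mp hw0).resolve_left hε) rfl
  have hsymm := hrev (f w)
  rw [f.symm_apply_apply, hfw] at hsymm
  have hfst : (f (0, (f w).2)).1 = -w.1 := by simpa [refl2] using congrArg Prod.fst hsymm
  have hpos := haxis (f w).2
  have hw : 0 ≤ ε * w.1 := hw
  rw [hfst] at hpos
  linarith

/-- A map sending the closed half-plane `0 ≤ ε x` into its interior has no symmetric periodic
point. -/
theorem false_of_mapsTo_halfPlane {f : ℝ × ℝ → ℝ × ℝ} {ε : ℝ}
    (hmaps : ∀ z : ℝ × ℝ, 0 ≤ ε * z.1 → 0 < ε * (f z).1) {z : ℝ × ℝ} {k l : ℕ}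
    (hk : 1 ≤ k) (hl : 1 ≤ l) (hzk : f^[k] z = z) (hzl : f^[l] z = refl2 z) : False := by
  have iterate_pos (n : ℕ) {w : ℝ × ℝ} (hw : 0 ≤ ε * w.1) : 0 < ε * (f^[n + 1] w).1 := by
    induction n with
    | zero => exact hmaps w hw
    | succ n ih => rw [Function.iterate_succ_apply']; exact hmaps _ ih.le
  obtain ⟨k, rfl⟩ := Nat.exists_eq_add_of_le' hk
  obtain ⟨l, rfl⟩ := Nat.exists_eq_add_of_le' hl
  have hrefl : (refl2 z).1 = -z.1 := rfl
  rcases le_total 0 (ε * z.1) with hz | hz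
  · have h₁ := iterate_pos k hz
    have h₂ := iterate_pos l hz
    rw [hzk] at h₁
    rw [hzl, hrefl] at h₂
    linarith
  · have hperiod : f^[(k + 1) * (l + 1)] z = z := by
      rw [Function.iterate_mul, Function.iterate_fixed hzk]
    have hreturn : f^[k * (l + 1)] (refl2 z) = z := by
      rw [← hzl, ← Function.iterate_add_apply, ← Nat.succ_mul, hperiod]
    have hperiod' : f^[k + 1] (refl2 z) = refl2 z := by
      rw [← hzl, ← Function.iterate_add_apply, Nat.add_comm, Function.iterate_add_apply, hzk]
    have hstart : 0 ≤ ε * (refl2 z).1 := by rw [hrefl]; linarith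
    have h₁ := iterate_pos k hstart
    rw [hperiod', hrefl] at h₁
    have h₂ : 0 < ε * (f^[k * (l + 1)] (refl2 z)).1 := by
      rcases Nat.eq_zero_or_pos (k * (l + 1)) with h | h
      · rw [h]; simpa [hrefl] using h₁
      · obtain ⟨n, hn⟩ := Nat.exists_eq_add_of_le' h
        rw [hn]; exact iterate_pos n hstart
    rw [hreturn] at h₂
    linarith

/-- **Proposition 4.3 (Brouwer's lemma for reversible maps).** An orientation
preserving (isotopic to the identity) reversible homeomorphism of the plane
with a symmetric periodic point has a symmetric fixed point. -/
theorem brouwer_lemma_reversible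
    (f : (ℝ × ℝ) ≃ₜ (ℝ × ℝ))
    (hrev : ∀ z, f (refl2 z) = refl2 (f.symm z))
    (hiso : IsotopicToIdPlane f)
    (hper : ∃ (z : ℝ × ℝ) (k l : ℕ), 1 ≤ k ∧ 1 ≤ l ∧
      (⇑f)^[k] z = z ∧ (⇑f)^[l] z = refl2 z) :
    ∃ w : ℝ × ℝ, f w = w ∧ refl2 w = w := by
  by_contra! hno
  have hfix (t : ℝ) : f (0, t) ≠ (0, t) := fun h => hno _ h (by simp [refl2])
  obtain ⟨z, k, l, hk, hl, hzk, hzl⟩ := hper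
  have hne := fst_apply_axis_ne_zero hrev hiso hfix
  obtain ⟨ε, hε⟩ : ∃ ε : ℝ, ∀ t : ℝ, 0 < ε * (f (0, t)).1 := by
    refine ⟨(f (0, 0)).1, fun t => ?_⟩
    have hcont : Continuous fun t : ℝ => (f (0, t)).1 := by fun_prop
    by_contra! hneg
    have hmem : (0 : ℝ) ∈ uIcc (f (0, 0)).1 (f (0, t)).1 := by
      rcases mul_nonpos_iff.mp hneg with h | h
      · exact mem_uIcc_of_ge h.2 h.1
      · exact mem_uIcc_of_le h.1 h.2
    obtain ⟨s, -, hs⟩ := intermediate_value_uIcc hcont.continuousOn hmem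
    exact hne s hs
  exact false_of_mapsTo_halfPlane (fun w => mapsTo_halfPlane hrev hε) hk hl hzk hzl
end
end

section
/- Let Ω ⊆ ℝ² be an invariant domain and let f : Ω → Ω be a reversible homeomorphism isotopic to the identity. Suppose z = (0,y) ∈ Fix I_Ω satisfies f²(z) = z (so z is a symmetric 2-periodic point lying on Fix I_Ω), and suppose z and f(z) lie on the same connected component of Fix I_Ω. Then there exists a symmetric fixed point of f on the closed straight segment [z, f(z)] ⊆ Fix I_Ω joining z and f(z), i.e., a point w on this segment with f(w) = w (and automatically I(w) = w). -/
open Set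

noncomputable section

lemma refl2_mem_of_inv {Ω : Set (ℝ × ℝ)} (hinv : refl2 '' Ω = Ω) {p : ℝ × ℝ}
    (hp : p ∈ Ω) : refl2 p ∈ Ω := by
  rw [← hinv]; exact Set.mem_image_of_mem _ hp

/-- An invariant domain: a connected subset `Ω ⊆ ℝ²` with `I(Ω) = Ω` and
`int(cl Ω) ⊆ Ω ⊆ cl(int Ω)`. -/
structure IsInvariantDomain (Ω : Set (ℝ × ℝ)) : Prop where
  connected : IsConnected Ω
  inv : refl2 '' Ω = Ω
  int_cl_subset : interior (closure Ω) ⊆ Ω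
  subset_cl_int : Ω ⊆ closure (interior Ω)

/-- A continuous function on a preconnected space whose exponential is constant is constant. -/
lemma eq_of_exp_const {A : Type*} [TopologicalSpace A] [PreconnectedSpace A] {g : A → ℂ}
    (hg : Continuous g) (h : ∀ a b, Complex.exp (g a) = Complex.exp (g b)) (a b : A) :
    g a = g b :=
  Complex.isCoveringMap_exp.const_of_comp hg (fun a b => Subtype.ext (h a b)) a b

/-- A nowhere vanishing continuous function on the unit square has a continuous logarithm. -/
lemma exists_continuous_log_unitSquare (E : C(unitInterval × unitInterval, ℂ))
    (hne : ∀ a, E a ≠ 0) :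
    ∃ L : C(unitInterval × unitInterval, ℂ), ∀ a, Complex.exp (L a) = E a := by
  let r : C(ℝ × ℝ, unitInterval × unitInterval) :=
    ⟨Prod.map (projIcc 0 1 zero_le_one) (projIcc 0 1 zero_le_one),
      continuous_projIcc.prodMap continuous_projIcc⟩
  let i : C(unitInterval × unitInterval, ℝ × ℝ) :=
    ⟨Prod.map (↑) (↑), continuous_subtype_val.prodMap continuous_subtype_val⟩
  have hri : ∀ a, r (i a) = a := fun a =>
    Prod.ext (projIcc_val zero_le_one a.1) (projIcc_val zero_le_one a.2)
  obtain ⟨L, ⟨-, hL⟩, -⟩ := Complex.isCoveringMapOn_exp.existsUnique_continuousMap_lifts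
    (E.comp r) (a₀ := (0, 0)) (Complex.exp_log (hne _)) (fun _ => hne _)
  refine ⟨L.comp i, fun a => ?_⟩
  simpa [hri] using congrFun hL (i a)

/-- There is no homotopy of paths in `ℂ \ {0}` with antipodal endpoints that starts at a path
and ends at its complex conjugate. -/
lemma no_antipodal_homotopy_to_conj (E : C(unitInterval × unitInterval, ℂ))
    (hne : ∀ a, E a ≠ 0) (hanti : ∀ s, E (s, 1) = -E (s, 0))
    (hconj : ∀ t, E (1, t) = (starRingEnd ℂ) (E (0, t))) : False := by
  obtain ⟨L, hexp⟩ := exists_continuous_log_unitSquare E hne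
  have hturn : ∀ s, Complex.exp (L (s, 1) - L (s, 0)) = -1 := fun s => by
    rw [Complex.exp_sub, hexp, hexp, hanti, neg_div, div_self (hne _)]
  have hs : L (1, 1) - L (1, 0) = L (0, 1) - L (0, 0) :=
    eq_of_exp_const (g := fun s : unitInterval => L (s, 1) - L (s, 0)) (by fun_prop)
      (fun a b => by rw [hturn, hturn]) 1 0
  have hratio : ∀ t, Complex.exp (L (1, t) - (starRingEnd ℂ) (L (0, t))) = 1 := fun t => by
    rw [Complex.exp_sub, Complex.exp_conj, hexp, hexp, ← hconj, div_self (hne _)]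
  have ht : L (1, 1) - (starRingEnd ℂ) (L (0, 1)) = L (1, 0) - (starRingEnd ℂ) (L (0, 0)) :=
    eq_of_exp_const (g := fun t : unitInterval => L (1, t) - (starRingEnd ℂ) (L (0, t)))
      (by fun_prop) (fun a b => by rw [hratio, hratio]) 1 0
  have hreal : (starRingEnd ℂ) (L (0, 1) - L (0, 0)) = L (0, 1) - L (0, 0) := by
    rw [map_sub]; linear_combination hs - ht
  obtain ⟨r, hr⟩ := Complex.conj_eq_iff_real.mp hreal
  have hneg := hturn 0
  rw [hr, ← Complex.ofReal_exp] at hneg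
  have : Real.exp r = -1 := by exact_mod_cast hneg
  linarith [Real.exp_pos r]

/-- A preconnected subset of the vertical axis contains the segment between any two of its
points. -/
lemma IsPreconnected.segment_subset_of_fst_eq_zero {C : Set (ℝ × ℝ)} (hC : IsPreconnected C)
    (hC0 : ∀ p ∈ C, p.1 = 0) {a b : ℝ × ℝ} (ha : a ∈ C) (hb : b ∈ C) : segment ℝ a b ⊆ C := by
  intro p hp
  have hconv : Convex ℝ (Prod.snd '' C) :=
    (hC.image _ continuous_snd.continuousOn).ordConnected.convex
  obtain ⟨u, v, hu, hv, huv, rfl⟩ := hp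
  obtain ⟨q, hq, hq2⟩ := hconv (mem_image_of_mem _ ha) (mem_image_of_mem _ hb) hu hv huv
  have : u • a + v • b = q := by
    ext
    · simp [hC0 a ha, hC0 b hb, hC0 q hq]
    · simpa using hq2.symm
  rwa [this]

lemma refl2_eq_self {p : ℝ × ℝ} (hp : p.1 = 0) : refl2 p = p := by
  ext <;> simp [refl2, hp]

/-- **Proposition 4.4.** Let `f` be a reversible homeomorphism of an invariant
domain `Ω` isotopic to the identity with a symmetric 2-periodic point
`z = (0,y) ∈ Fix I_Ω`. If `z` and `f(z)` lie on the same connected component of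
`Fix I_Ω`, then there is a symmetric fixed point of `f` on the segment
`[z, f(z)] ⊆ Fix I_Ω`. -/
theorem symmetric_two_periodic_gives_symmetric_fixed_point
    (Ω : Set (ℝ × ℝ)) (hΩ : IsInvariantDomain Ω)
    (f : Ω ≃ₜ Ω)
    (hrev : ∀ z : Ω,
      (f ⟨refl2 z, refl2_mem_of_inv hΩ.inv z.2⟩ : ℝ × ℝ) = refl2 (f.symm z))
    (hiso : IsotopicToId f)
    (z : Ω) (hz : (z : ℝ × ℝ).1 = 0)
    (h2per : f (f z) = z)
    (hcomp : connectedComponentIn (Ω ∩ {p : ℝ × ℝ | p.1 = 0}) (z : ℝ × ℝ)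
      = connectedComponentIn (Ω ∩ {p : ℝ × ℝ | p.1 = 0}) ((f z : Ω) : ℝ × ℝ)) :
    ∃ w : Ω, (w : ℝ × ℝ) ∈ segment ℝ (z : ℝ × ℝ) ((f z : Ω) : ℝ × ℝ) ∧
      f w = w ∧ refl2 (w : ℝ × ℝ) = (w : ℝ × ℝ) := by
  have hmap : ∀ w : Ω, (w : ℝ × ℝ).1 = 0 → (f w : ℝ × ℝ) = refl2 (f.symm w) := fun w hw => by
    rw [← hrev w]
    congr 2
    exact Subtype.ext (refl2_eq_self hw).symm
  have hsymm : f.symm z = f z := by rw [f.symm_apply_eq, h2per]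
  have hfz : (f z : ℝ × ℝ).1 = 0 := by
    have h := congrArg Prod.fst (hmap z hz)
    rw [hsymm] at h
    simp only [refl2] at h
    linarith
  have hzmem := mem_connectedComponentIn (F := Ω ∩ {p : ℝ × ℝ | p.1 = 0}) ⟨z.2, hz⟩
  have hfzmem := mem_connectedComponentIn (F := Ω ∩ {p : ℝ × ℝ | p.1 = 0}) ⟨(f z).2, hfz⟩
  rw [← hcomp] at hfzmem
  have hseg : segment ℝ (z : ℝ × ℝ) (f z) ⊆ Ω ∩ {p : ℝ × ℝ | p.1 = 0} :=
    (isPreconnected_connectedComponentIn.segment_subset_of_fst_eq_zero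
      (fun p hp => (connectedComponentIn_subset _ _ hp).2) hzmem hfzmem).trans
      (connectedComponentIn_subset _ _)
  by_contra hno
  have hnofix : ∀ w : Ω, (w : ℝ × ℝ) ∈ segment ℝ (z : ℝ × ℝ) (f z) → f w ≠ w :=
    fun w hw hfw => hno ⟨w, hw, hfw, refl2_eq_self (hseg hw).2⟩
  obtain ⟨H, hH, hhomeo, hH0, hH1⟩ := hiso
  have hmem : ∀ t : unitInterval,
      AffineMap.lineMap (z : ℝ × ℝ) (f z : ℝ × ℝ) (t : ℝ) ∈ segment ℝ (z : ℝ × ℝ) (f z) :=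
    fun t => by rw [segment_eq_image_lineMap]; exact mem_image_of_mem _ t.2
  let J : unitInterval → Ω := fun t => ⟨_, (hseg (hmem t)).1⟩
  have hJ : Continuous J :=
    (AffineMap.lineMap_continuous.comp continuous_subtype_val).subtype_mk _
  have hJ0 : J 0 = z := Subtype.ext (by simp [J])
  have hJ1 : J 1 = f z := Subtype.ext (by simp [J])
  let E : C(unitInterval × unitInterval, ℂ) :=
    ⟨fun a => Complex.equivRealProdCLM.symm
      ((H (a.1, J a.2) : ℝ × ℝ) - H (a.1, f.symm (J a.2))), by fun_prop⟩
  refine no_antipodal_homotopy_to_conj E (fun a ha => ?_) (fun s => ?_) (fun t => ?_)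
  · obtain ⟨e, he⟩ := hhomeo a.1
    have h : (H (a.1, J a.2) : ℝ × ℝ) - H (a.1, f.symm (J a.2)) = 0 :=
      (map_eq_zero_iff _ Complex.equivRealProdCLM.symm.injective).mp ha
    rw [sub_eq_zero, SetCoe.ext_iff, he, he] at h
    exact hnofix (J a.2) (hmem a.2) ((f.symm_apply_eq.mp (e.injective h).symm).symm)
  · simp only [E, ContinuousMap.coe_mk, hJ0, hJ1, hsymm, f.symm_apply_apply]
    rw [← map_neg, neg_sub]
  · have h0 : (J t : ℝ × ℝ).1 = 0 := (hseg (hmem t)).2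
    have hE1 : E (1, t) =
        Complex.equivRealProdCLM.symm (refl2 (f.symm (J t)) - (J t : ℝ × ℝ)) := by
      rw [← hmap _ h0]
      change Complex.equivRealProdCLM.symm
        ((H (⟨1, _⟩, J t) : ℝ × ℝ) - H (⟨1, _⟩, f.symm (J t))) = _
      rw [hH1, hH1, f.apply_symm_apply]
    have hE0 : E (0, t) =
        Complex.equivRealProdCLM.symm ((J t : ℝ × ℝ) - f.symm (J t)) := by
      change Complex.equivRealProdCLM.symm
        ((H (⟨0, _⟩, J t) : ℝ × ℝ) - H (⟨0, _⟩, f.symm (J t))) = _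
      rw [hH0, hH0]
    rw [hE1, hE0]
    apply Complex.ext
    · simp [refl2, h0]
    · simp [refl2, neg_add_eq_sub]
end
end

section
/- Let f : A → A be an area preserving reversible homeomorphism of the closed annulus A. If f has a periodic point (some z ∈ A and integer k ≥ 1 with f^k(z) = z), then f has an interior symmetric periodic point, i.e., a point z in the interior Å with f^k(z) = z and f^ℓ(z) = I(z) for some integers k, ℓ ≥ 1. -/
open MeasureTheory Set

noncomputable section

/-! ### The universal cover of the annulus -/

/-- The strip `ℝ × [1,2]`, the universal cover of the closed annulus. -/
abbrev Strip : Type := ℝ × Icc (1 : ℝ) 2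

instance : PreconnectedSpace (Icc (1 : ℝ) 2) := Subtype.preconnectedSpace isPreconnected_Icc

lemma image_val_Ioo_one_two :
    image Subtype.val {r : Icc (1 : ℝ) 2 | (r : ℝ) ∈ Ioo (1 : ℝ) 2} = Ioo 1 2 := by
  ext y
  constructor
  · rintro ⟨r, hr, rfl⟩
    exact hr
  · intro hy
    exact ⟨⟨y, Ioo_subset_Icc_self hy⟩, hy, rfl⟩

lemma enorm2_polar {r : ℝ} (hr : 0 ≤ r) (θ : ℝ) : enorm2 (r * Real.sin θ, r * Real.cos θ) = r := by
  have : (r * Real.sin θ) ^ 2 + (r * Real.cos θ) ^ 2 = r ^ 2 := by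
    linear_combination r ^ 2 * Real.sin_sq_add_cos_sq θ
  rw [enorm2, this, Real.sqrt_sq hr]

lemma IA_IA (a : annulus) : IA (IA a) = a := by simp [IA, refl2]

lemma continuous_enorm2 : Continuous enorm2 := by unfold enorm2; fun_prop

lemma measurableSet_annulus : MeasurableSet annulus :=
  (isClosed_Icc (a := (1 : ℝ)) (b := 2) |>.preimage continuous_enorm2).measurableSet

lemma volume_annulus_lt_top : volume annulus < ⊤ := by
  refine (measure_mono (t := Icc (-2, -2) (2, 2)) fun p hp => ?_).trans_lt
    isCompact_Icc.measure_lt_top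
  have h : p.1 ^ 2 + p.2 ^ 2 ≤ 2 ^ 2 := (Real.sqrt_le_left (by norm_num)).1 hp.2
  exact ⟨⟨by nlinarith, by nlinarith⟩, by nlinarith, by nlinarith⟩

instance : IsFiniteMeasure
    ((volume : Measure (ℝ × ℝ)).comap (Subtype.val : annulus → ℝ × ℝ)) where
  measure_univ_lt_top := by
    rw [(MeasurableEmbedding.subtype_coe measurableSet_annulus).comap_apply, image_univ,
      Subtype.range_coe]
    exact volume_annulus_lt_top

namespace Strip

/-- The deck transformation by `n` full turns. -/
def shift (n : ℤ) (x : Strip) : Strip := (x.1 + n, x.2)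

/-- The lift of the reflection `I` fixing the segment `{0} × [1,2]`. -/
def mirror (x : Strip) : Strip := (-x.1, x.2)

/-- The covering map in polar coordinates; the angle is measured in turns from the
positive `y`-axis. -/
def cover (x : Strip) : annulus :=
  ⟨((x.2 : ℝ) * Real.sin (2 * Real.pi * x.1), (x.2 : ℝ) * Real.cos (2 * Real.pi * x.1)), by
    have h := enorm2_polar (zero_le_one.trans x.2.2.1) (2 * Real.pi * x.1)
    exact ⟨x.2.2.1.trans h.ge, h.le.trans x.2.2.2⟩⟩

lemma enorm2_cover (x : Strip) : enorm2 (cover x) = x.2 :=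
  enorm2_polar (zero_le_one.trans x.2.2.1) _

@[simp] lemma mirror_mirror (x : Strip) : mirror (mirror x) = x := by simp [mirror]

@[simp] lemma mirror_fst (x : Strip) : (mirror x).1 = -x.1 := rfl

@[simp] lemma shift_fst (n : ℤ) (x : Strip) : (shift n x).1 = x.1 + n := rfl

@[simp] lemma shift_zero (x : Strip) : shift 0 x = x := by simp [shift]

lemma shift_shift (m n : ℤ) (x : Strip) : shift m (shift n x) = shift (m + n) x := by
  simp only [shift, Int.cast_add, Prod.mk.injEq, and_true]; ring

lemma mirror_shift (n : ℤ) (x : Strip) : mirror (shift n x) = shift (-n) (mirror x) := by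
  simp only [shift, mirror, Int.cast_neg, Prod.mk.injEq, and_true]; ring

lemma shift_left_injective (x : Strip) : Function.Injective fun n : ℤ => shift n x := by
  intro m n h
  simpa [shift] using h

lemma continuous_shift (n : ℤ) : Continuous (shift n) := by unfold shift; fun_prop

lemma continuous_mirror : Continuous mirror := by unfold mirror; fun_prop

lemma continuous_cover : Continuous cover := by unfold cover; fun_prop

lemma cover_shift (n : ℤ) (x : Strip) : cover (shift n x) = cover x := by
  have : 2 * Real.pi * (x.1 + n) = 2 * Real.pi * x.1 + n * (2 * Real.pi) := by ring
  simp [cover, shift, this, Real.sin_add_int_mul_two_pi, Real.cos_add_int_mul_two_pi]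

lemma cover_mirror (x : Strip) : cover (mirror x) = IA (cover x) := by
  simp [cover, mirror, IA, refl2]

lemma cover_eq_cover_iff {x y : Strip} : cover x = cover y ↔ ∃ n : ℤ, x = shift n y := by
  constructor
  · intro h
    have h2 : (x.2 : ℝ) = y.2 := by rw [← enorm2_cover, ← enorm2_cover, h]
    have hpos : (y.2 : ℝ) ≠ 0 := by have := y.2.2.1; linarith
    have hxy := congrArg Subtype.val h
    simp only [cover, h2, Prod.mk.injEq, mul_right_inj' hpos] at hxy
    have hang := Real.Angle.cos_sin_inj hxy.2 hxy.1
    rw [Real.Angle.angle_eq_iff_two_pi_dvd_sub] at hang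
    obtain ⟨k, hk⟩ := hang
    refine ⟨k, Prod.ext ?_ (Subtype.ext h2)⟩
    have : 2 * Real.pi * (x.1 - y.1 - k) = 0 := by linear_combination hk
    have := (mul_eq_zero.1 this).resolve_left (by positivity)
    simp only [shift_fst]
    linarith
  · rintro ⟨n, rfl⟩
    exact cover_shift n y

/-- The section of the covering map with angle in `(0, 1]`. -/
def sect (a : annulus) : Strip :=
  (1 / 2 + Complex.arg ⟨-(a : ℝ × ℝ).2, -(a : ℝ × ℝ).1⟩ / (2 * Real.pi), ⟨enorm2 a, a.2⟩)

lemma cover_sect (a : annulus) : cover (sect a) = a := by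
  obtain ⟨⟨x, y⟩, ha⟩ := a
  have hn : ‖(⟨-y, -x⟩ : ℂ)‖ = enorm2 (x, y) := by
    rw [Complex.norm_eq_sqrt_sq_add_sq, enorm2]
    congr 1
    ring
  have hne : (⟨-y, -x⟩ : ℂ) ≠ 0 := by
    rw [← norm_pos_iff, hn]
    linarith [ha.1]
  have hang : 2 * Real.pi * (1 / 2 + Complex.arg ⟨-y, -x⟩ / (2 * Real.pi)) =
      Complex.arg ⟨-y, -x⟩ + Real.pi := by
    field_simp
    ring
  have h0 : enorm2 (x, y) ≠ 0 := by have := ha.1; linarith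
  apply Subtype.ext
  simp only [cover, sect, hang, Real.sin_add_pi, Real.cos_add_pi, Complex.sin_arg,
    Complex.cos_arg hne, hn, Prod.mk.injEq]
  constructor <;> field_simp

lemma sect_fst_mem (a : annulus) : (sect a).1 ∈ Ioc (0 : ℝ) 1 := by
  have hpi := Real.pi_pos
  have h1 := Complex.neg_pi_lt_arg ⟨-(a : ℝ × ℝ).2, -(a : ℝ × ℝ).1⟩
  have h2 := Complex.arg_le_pi ⟨-(a : ℝ × ℝ).2, -(a : ℝ × ℝ).1⟩
  have e : ∀ t : ℝ, 1 / 2 + t / (2 * Real.pi) = (Real.pi + t) / (2 * Real.pi) := by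
    intro t; field_simp
  simp only [sect, e]
  exact ⟨by apply div_pos <;> linarith, by rw [div_le_one] <;> linarith⟩

lemma sect_cover {x : Strip} (hx : x.1 ∈ Ioo (0 : ℝ) 1) : sect (cover x) = x := by
  obtain ⟨n, hn⟩ := cover_eq_cover_iff.1 (cover_sect (cover x))
  have h := sect_fst_mem (cover x)
  rw [hn, shift_fst] at h
  have h1 : (-1 : ℝ) < n := by linarith [h.1, hx.2]
  have h2 : (n : ℝ) < 1 := by linarith [h.2, hx.1]
  have : n = 0 := by
    have h1 : (-1 : ℤ) < n := by exact_mod_cast h1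
    have h2 : n < 1 := by exact_mod_cast h2
    omega
  rw [hn, this, shift_zero]

lemma measurable_sect : Measurable sect := by
  have he : Measurable fun a : annulus => enorm2 a :=
    continuous_enorm2.measurable.comp measurable_subtype_coe
  have hc : Measurable fun a : annulus =>
      (⟨-(a : ℝ × ℝ).2, -(a : ℝ × ℝ).1⟩ : ℂ) :=
    Complex.measurableEquivRealProd.symm.measurable.comp (by fun_prop :
      Measurable fun a : annulus => (-(a : ℝ × ℝ).2, -(a : ℝ × ℝ).1))
  exact ((hc.carg.div_const _).const_add _).prodMk (he.subtype_mk)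

lemma continuousAt_sect {x : Strip} (hx : x.1 ∈ Ioo (0 : ℝ) 1) :
    ContinuousAt sect (cover x) := by
  have he : Continuous fun a : annulus => enorm2 a :=
    continuous_enorm2.comp continuous_subtype_val
  have hc : Continuous fun a : annulus =>
      (⟨-(a : ℝ × ℝ).2, -(a : ℝ × ℝ).1⟩ : ℂ) :=
    Complex.equivRealProdCLM.symm.continuous.comp (by fun_prop :
      Continuous fun a : annulus => (-(a : ℝ × ℝ).2, -(a : ℝ × ℝ).1))
  have hs : (⟨-(cover x : ℝ × ℝ).2, -(cover x : ℝ × ℝ).1⟩ : ℂ) ∈ Complex.slitPlane := by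
    rw [Complex.mem_slitPlane_iff_arg]
    have h := congrArg Prod.fst (sect_cover hx)
    have hpi := Real.pi_pos
    constructor
    · intro hpi'
      simp only [sect, hpi'] at h
      field_simp at h
      linarith [hx.2]
    · intro h0
      have := congrArg norm h0
      have h1 := (cover x).2.1
      rw [Complex.norm_eq_sqrt_sq_add_sq, norm_zero] at this
      have e : enorm2 (cover x) = 0 := by
        rw [← this, enorm2]; congr 1; ring
      linarith
  exact ContinuousAt.prodMk
    (((Complex.continuousAt_arg hs).comp (f := fun a : annulus =>
      (⟨-(a : ℝ × ℝ).2, -(a : ℝ × ℝ).1⟩ : ℂ)) hc.continuousAt |>.div_const _).const_add _)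
    (he.subtype_mk _).continuousAt

/-- Two continuous maps into the strip with the same projection differ by a deck
transformation. -/
lemma exists_eq_shift {u v : Strip → Strip} (hu : Continuous u) (hv : Continuous v)
    (h : ∀ x, cover (u x) = cover (v x)) : ∃ n : ℤ, ∀ x, u x = shift n (v x) := by
  choose n hn using fun x => cover_eq_cover_iff.1 (h x)
  have hcont : Continuous n := by
    refine Int.isClosedEmbedding_coe_real.isInducing.continuous_iff.2 ?_
    have : (Int.cast ∘ n : Strip → ℝ) = fun x => (u x).1 - (v x).1 := by
      funext x; rw [hn x]; simp
    rw [this]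
    fun_prop
  refine ⟨n (0, ⟨1, by norm_num⟩), fun x => ?_⟩
  rw [PreconnectedSpace.constant inferInstance hcont (x := (0, ⟨1, by norm_num⟩)) (y := x)]
  exact hn x

/-- Every continuous self-map of the annulus lifts to the strip. -/
lemma exists_lift {f : annulus → annulus} (hf : Continuous f) :
    ∃ F : Strip → Strip, Continuous F ∧ ∀ x, cover (F x) = f (cover x) := by
  let π : ℝ × ℝ → Strip := fun y => (y.1, projIcc 1 2 one_le_two y.2)
  have hπ : Continuous π := by
    exact continuous_fst.prodMk (continuous_projIcc.comp continuous_snd)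
  let e : annulus → ℂ := fun a => ⟨(a : ℝ × ℝ).2, (a : ℝ × ℝ).1⟩
  have he : Continuous e :=
    Complex.equivRealProdCLM.symm.continuous.comp (by fun_prop :
      Continuous fun a : annulus => ((a : ℝ × ℝ).2, (a : ℝ × ℝ).1))
  have hnorm : ∀ a, ‖e a‖ = enorm2 a := by
    intro a
    rw [Complex.norm_eq_sqrt_sq_add_sq, enorm2, add_comm]
  have hne : ∀ a, e a ≠ 0 := by
    intro a
    rw [← norm_pos_iff, hnorm]
    linarith [a.2.1]
  let Φ : C(ℝ × ℝ, ℂ) := ⟨fun y => e (f (cover (π y))),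
    he.comp (hf.comp (continuous_cover.comp hπ))⟩
  have hlift : ∃ L : C(ℝ × ℝ, ℂ), ∀ y, Complex.exp (L y) = Φ y := by
    obtain ⟨L, ⟨-, hL⟩, -⟩ := Complex.isCoveringMapOn_exp.existsUnique_continuousMap_lifts Φ
      (a₀ := (0, 0)) (Complex.exp_log (hne _)) (fun y => hne _)
    exact ⟨L, fun y => congrFun hL y⟩
  obtain ⟨L, hL⟩ := hlift
  refine ⟨fun x => ((L (x.1, x.2)).im / (2 * Real.pi),
    ⟨enorm2 (f (cover x)), (f (cover x)).2⟩), ?_, ?_⟩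
  · have h2 : Continuous fun a : annulus => enorm2 a :=
    continuous_enorm2.comp continuous_subtype_val
    have h3 : Continuous fun x : Strip => enorm2 (f (cover x)) :=
      h2.comp (hf.comp continuous_cover)
    exact Continuous.prodMk (by fun_prop) (h3.subtype_mk _)
  · intro x
    have hx : Complex.exp (L (x.1, x.2)) = e (f (cover x)) := by
      rw [hL]
      simp [Φ, π]
    have hr : Real.exp (L (x.1, x.2)).re = enorm2 (f (cover x)) := by
      rw [← Complex.norm_exp, hx, hnorm]
    have hre := congrArg Complex.re hx
    have him := congrArg Complex.im hx
    rw [Complex.exp_re, hr] at hre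
    rw [Complex.exp_im, hr] at him
    apply Subtype.ext
    have hang : 2 * Real.pi * ((L (x.1, x.2)).im / (2 * Real.pi)) = (L (x.1, x.2)).im := by
      field_simp
    simp only [cover, hang]
    exact Prod.ext him hre

end Strip

/-! ### Reversible lifts -/

/-- `g` is a reversible lift of `φ` to the strip commuting with the deck transformations. -/
structure IsReversibleLift (φ : annulus → annulus) (g : Strip → Strip) : Prop where
  continuous : Continuous g
  shift : ∀ n x, g (Strip.shift n x) = Strip.shift n (g x)
  rev : ∀ x, g (Strip.mirror (g (Strip.mirror x))) = x
  lift : ∀ x, Strip.cover (g x) = φ (Strip.cover x)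

namespace IsReversibleLift

open Strip

variable {φ : annulus → annulus} {g : Strip → Strip}

lemma map_mirror_map (hg : IsReversibleLift φ g) (x : Strip) : g (mirror (g x)) = mirror x := by
  simpa using hg.rev (mirror x)

lemma mirror_rev (hg : IsReversibleLift φ g) (x : Strip) : mirror (g (mirror (g x))) = x := by
  rw [hg.map_mirror_map, mirror_mirror]

lemma iterate (hg : IsReversibleLift φ g) (m : ℕ) : IsReversibleLift φ^[m] g^[m] where
  continuous := hg.continuous.iterate m
  shift n x := by
    exact (Function.Commute.iterate_left (hg.shift n) m) x
  rev := by
    induction m with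
    | zero => intro x; simp
    | succ m ih =>
      intro x
      rw [Function.iterate_succ_apply, Function.iterate_succ_apply', hg.map_mirror_map, ih]
  lift x := by
    exact (Function.Semiconj.iterate_right hg.lift m) x

lemma shift_comp (hg : IsReversibleLift φ g) (n : ℤ) :
    IsReversibleLift φ fun x => Strip.shift n (g x) where
  continuous := (continuous_shift n).comp hg.continuous
  shift m x := by rw [hg.shift, shift_shift, shift_shift, add_comm]
  rev x := by rw [mirror_shift, hg.shift, hg.rev, shift_shift, add_neg_cancel, shift_zero]
  lift x := by rw [cover_shift, hg.lift]

lemma mirror_conj (hg : IsReversibleLift φ g) :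
    IsReversibleLift (fun a => IA (φ (IA a))) fun x => mirror (g (mirror x)) where
  continuous := continuous_mirror.comp (hg.continuous.comp continuous_mirror)
  shift m x := by rw [mirror_shift, hg.shift, mirror_shift, neg_neg]
  rev x := by simp only [mirror_mirror, hg.mirror_rev]
  lift x := by rw [cover_mirror, hg.lift, cover_mirror]

/-- A continuous real function without zeros on a preconnected set has constant sign. -/
lemma _root_.IsPreconnected.forall_pos_or_forall_neg {X : Type*} [TopologicalSpace X] {s : Set X}
    (hs : IsPreconnected s) {u : X → ℝ} (hu : ContinuousOn u s) (h0 : ∀ x ∈ s, u x ≠ 0) :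
    (∀ x ∈ s, 0 < u x) ∨ ∀ x ∈ s, u x < 0 := by
  by_contra! h
  obtain ⟨⟨x, hx, hux⟩, y, hy, huy⟩ := h
  obtain ⟨z, hz, huz⟩ := hs.intermediate_value hx hy hu ⟨hux, huy⟩
  exact h0 z hz huz

/-- A reversible lift pushing the interior of the central segment to the right preserves the right
half of the strip. -/
lemma forall_pos_of_axis_pos (hg : IsReversibleLift φ g)
    (h : ∀ r : Icc (1 : ℝ) 2, (r : ℝ) ∈ Ioo (1 : ℝ) 2 → 0 < (g (0, r)).1) {x : Strip}
    (hx : 0 < x.1) : 0 < (g x).1 := by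
  have hle : ∀ r : Icc (1 : ℝ) 2, 0 ≤ (g (0, r)).1 := by
    have hcl : IsClosed {r : Icc (1 : ℝ) 2 | 0 ≤ (g (0, r)).1} := by
      have := hg.continuous
      exact isClosed_le continuous_const (by fun_prop)
    have hd : Dense {r : Icc (1 : ℝ) 2 | (r : ℝ) ∈ Ioo (1 : ℝ) 2} := by
      rw [Subtype.dense_iff]
      intro r hr
      rw [image_val_Ioo_one_two, closure_Ioo (by norm_num)]
      exact hr
    intro r
    exact hcl.closure_subset_iff.2 (fun r hr => (h r hr).le) (hd r)
  have hpre : IsPreconnected {x : Strip | 0 < x.1} := by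
    have : {x : Strip | 0 < x.1} = Ioi (0 : ℝ) ×ˢ univ := by ext; simp
    rw [this]
    exact isPreconnected_Ioi.prod isPreconnected_univ
  have hne : ∀ x ∈ {x : Strip | 0 < x.1}, (g x).1 ≠ 0 := by
    intro x hx h0
    have h1 := hg.mirror_rev x
    have h2 : mirror (g x) = (0, (g x).2) := by simp [mirror, h0]
    rw [h2] at h1
    have h3 := hle (g x).2
    have h4 : 0 < x.1 := hx
    rw [← h1, mirror_fst] at h4
    linarith
  rcases hpre.forall_pos_or_forall_neg (continuous_fst.comp hg.continuous).continuousOn hne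
    with hp | hn
  · exact hp x hx
  · exfalso
    have h1 := hn (Strip.shift 1 (0, x.2)) (by simp)
    have h2 := hle x.2
    rw [Function.comp_apply, hg.shift, shift_fst] at h1
    push_cast at h1
    linarith

/-- If no interior point of the central segment returns to it, a reversible lift moves one of the
two half strips, and its bounding segment, into itself. -/
lemma pos_or_neg (hg : IsReversibleLift φ g)
    (h : ∀ r : Icc (1 : ℝ) 2, (r : ℝ) ∈ Ioo (1 : ℝ) 2 → (g (0, r)).1 ≠ 0) :
    ((∀ r : Icc (1 : ℝ) 2, (r : ℝ) ∈ Ioo (1 : ℝ) 2 → 0 < (g (0, r)).1) ∧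
      ∀ x, 0 < x.1 → 0 < (g x).1) ∨
    ((∀ r : Icc (1 : ℝ) 2, (r : ℝ) ∈ Ioo (1 : ℝ) 2 → (g (0, r)).1 < 0) ∧
      ∀ x, x.1 < 0 → (g x).1 < 0) := by
  have hpre : IsPreconnected {r : Icc (1 : ℝ) 2 | (r : ℝ) ∈ Ioo (1 : ℝ) 2} := by
    rw [← Topology.IsInducing.subtypeVal.isPreconnected_image,
      image_val_Ioo_one_two]
    exact isPreconnected_Ioo
  have hcont : Continuous fun r : Icc (1 : ℝ) 2 => (g (0, r)).1 := by
    have := hg.continuous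
    fun_prop
  rcases hpre.forall_pos_or_forall_neg hcont.continuousOn h with hp | hn
  · exact Or.inl ⟨hp, fun x => hg.forall_pos_of_axis_pos hp⟩
  · refine Or.inr ⟨hn, fun x hx => ?_⟩
    have := hg.mirror_conj.forall_pos_of_axis_pos (x := mirror x)
      (fun r hr => by simpa [mirror] using hn r hr) (by simpa using hx)
    simpa using this

lemma axis_fst_ne_zero (hg : IsReversibleLift φ g) {r : Icc (1 : ℝ) 2}
    (h : IA (φ (cover (0, r))) ≠ φ (cover (0, r))) : (g (0, r)).1 ≠ 0 := by
  intro h0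
  apply h
  rw [← hg.lift, ← cover_mirror]
  congr 1
  exact Prod.ext (by simp [h0]) rfl

/-- If interior points of the central segment never return to the fixed locus of the reflection and
`g` has a fixed point, then the iterates of `g` move the left half strip by less than a turn. -/
lemma forall_iterate_lt_one (hg : IsReversibleLift φ g)
    (hsym : ∀ m : ℕ, 1 ≤ m → ∀ r : Icc (1 : ℝ) 2, (r : ℝ) ∈ Ioo (1 : ℝ) 2 →
      IA (φ^[m] (cover (0, r))) ≠ φ^[m] (cover (0, r)))
    {z : Strip} (hz : g z = z) {m : ℕ} (hm : 1 ≤ m) {x : Strip} (hx : x.1 < 0) :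
    (g^[m] x).1 < 1 := by
  have hq := (hg.iterate m).shift_comp (-1)
  rcases hq.pos_or_neg (fun r hr => axis_fst_ne_zero hq (hsym m hm r hr)) with h | h
  · exfalso
    have step : ∀ n : ℤ, 0 < z.1 + n → 0 < z.1 + (n - 1 : ℤ) := by
      intro n hn
      have := h.2 (Strip.shift n z) hn
      rw [(hg.iterate m).shift, Function.iterate_fixed hz, shift_fst, shift_fst] at this
      push_cast at this ⊢
      linarith
    obtain ⟨n, hn⟩ := exists_int_gt (-z.1)
    have all : ∀ j : ℕ, 0 < z.1 + (n - j : ℤ) := by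
      intro j
      induction j with
      | zero => simpa using (by linarith : 0 < z.1 + n)
      | succ j ih =>
        have := step _ ih
        push_cast at this ⊢
        linarith
    obtain ⟨j, hj⟩ := exists_nat_gt (z.1 + n)
    have := all j
    push_cast at this
    linarith
  · have := h.2 x hx
    rw [shift_fst] at this
    push_cast at this
    linarith

/-- By Poincaré recurrence, a reversible lift of an area preserving map with a fixed point cannot
push the central segment to the right without some later symmetric return. -/
lemma false_of_axis_pos (hg : IsReversibleLift φ g)
    (hφ : MeasurePreserving φ
      ((volume : Measure (ℝ × ℝ)).comap (Subtype.val : annulus → ℝ × ℝ))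
      ((volume : Measure (ℝ × ℝ)).comap (Subtype.val : annulus → ℝ × ℝ)))
    (hsym : ∀ m : ℕ, 1 ≤ m → ∀ r : Icc (1 : ℝ) 2, (r : ℝ) ∈ Ioo (1 : ℝ) 2 →
      IA (φ^[m] (cover (0, r))) ≠ φ^[m] (cover (0, r)))
    {z : Strip} (hz : g z = z)
    (hpos : ∀ r : Icc (1 : ℝ) 2, (r : ℝ) ∈ Ioo (1 : ℝ) 2 → 0 < (g (0, r)).1) : False := by
  have hR : ∀ x : Strip, 0 < x.1 → 0 < (g x).1 := fun x => hg.forall_pos_of_axis_pos hpos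
  have hRn : ∀ (n : ℕ) (x : Strip), 0 < x.1 → 0 < (g^[n] x).1 := by
    intro n
    induction n with
    | zero => exact fun x hx => hx
    | succ n ih => exact fun x hx => ih (g x) (hR x hx)
  -- Points of the right half strip whose preimage lies in the left half strip.
  let U : Set annulus := {a | 0 < (g (mirror (sect a))).1}
  have hUm : MeasurableSet U := measurableSet_lt measurable_const
    (measurable_fst.comp (hg.continuous.measurable.comp
      (continuous_mirror.measurable.comp measurable_sect)))
  let r₀ : Icc (1 : ℝ) 2 := ⟨3 / 2, by norm_num, by norm_num⟩
  have hr₀ : (r₀ : ℝ) ∈ Ioo (1 : ℝ) 2 := by constructor <;> norm_num [r₀]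
  obtain ⟨t, ht, htU⟩ : ∃ t : ℝ, t ∈ Ioo (0 : ℝ) 1 ∧ 0 < (g (mirror (t, r₀))).1 := by
    have hc : Continuous fun t : ℝ => (g (mirror (t, r₀))).1 := by
      have := hg.continuous
      have := continuous_mirror
      fun_prop
    have h0 : 0 < (g (mirror (0, r₀))).1 := by simpa [mirror] using hpos r₀ hr₀
    have h1 : ∀ᶠ t in nhdsWithin (0 : ℝ) (Ioi 0), 0 < (g (mirror (t, r₀))).1 :=
      nhdsWithin_le_nhds (hc.continuousAt.eventually (lt_mem_nhds h0))
    exact ((Filter.eventually_of_mem (Ioo_mem_nhdsGT one_pos) fun _ h => h).and h1).exists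
  have hU0 : (volume : Measure (ℝ × ℝ)).comap (Subtype.val : annulus → ℝ × ℝ) U ≠ 0 := by
    have hUn : U ∈ nhds (cover (t, r₀)) := by
      have hc : ContinuousAt (fun a => (g (mirror (sect a))).1) (cover (t, r₀)) :=
        (continuous_fst.comp (hg.continuous.comp continuous_mirror)).continuousAt.comp
          (continuousAt_sect ht)
      refine hc.eventually (lt_mem_nhds ?_)
      simpa only [sect_cover (x := (t, r₀)) ht] using htU
    have hA : annulus ∈ nhds (cover (t, r₀) : ℝ × ℝ) := by
      refine Filter.mem_of_superset (continuous_enorm2.continuousAt.preimage_mem_nhds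
        (Icc_mem_nhds (a := 1) (b := 2) ?_ ?_)) fun _ h => h
      · rw [enorm2_cover]; exact hr₀.1
      · rw [enorm2_cover]; exact hr₀.2
    rw [(MeasurableEmbedding.subtype_coe measurableSet_annulus).comap_apply]
    refine (Measure.measure_pos_of_mem_nhds volume (x := (cover (t, r₀) : ℝ × ℝ)) ?_).ne'
    rw [← map_nhds_subtype_coe_eq_nhds (cover (t, r₀)).2 hA]
    exact Filter.image_mem_map hUn
  obtain ⟨a, haU, m, hm, hmU⟩ :=
    hφ.conservative.exists_mem_iterate_mem hUm.nullMeasurableSet hU0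
  obtain ⟨n, rfl⟩ := Nat.exists_eq_succ_of_ne_zero hm
  have hx0 := (sect_fst_mem a).1
  have hlt : (g^[n + 1] (sect a)).1 < 1 := by
    have h := hg.forall_iterate_lt_one hsym hz (Nat.le_add_left 1 (n + 1))
      (x := mirror (g (mirror (sect a)))) (by simpa [U] using haU)
    rwa [Function.iterate_succ_apply, hg.rev] at h
  have hsec : sect (φ^[n + 1] a) = g^[n + 1] (sect a) := by
    rw [← sect_cover (x := g^[n + 1] (sect a)) ⟨hRn _ _ hx0, hlt⟩, (hg.iterate _).lift, cover_sect]
  have hmU' : 0 < (g (mirror (sect (φ^[n + 1] a)))).1 := hmU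
  rw [hsec, Function.iterate_succ_apply', hg.map_mirror_map, mirror_fst] at hmU'
  linarith [hRn n _ hx0]

lemma IA_map_IA_map (hg : IsReversibleLift φ g) (a : annulus) : IA (φ (IA (φ a))) = a := by
  have := congrArg cover (hg.mirror_rev (sect a))
  rwa [cover_mirror, hg.lift, cover_mirror, hg.lift, cover_sect] at this

/-- An area preserving map with a reversible lift having a fixed point moves an interior point of
the central segment to the fixed locus of the reflection, after some iterations. -/
theorem exists_symmetric_return (hg : IsReversibleLift φ g)
    (hφ : MeasurePreserving φ
      ((volume : Measure (ℝ × ℝ)).comap (Subtype.val : annulus → ℝ × ℝ))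
      ((volume : Measure (ℝ × ℝ)).comap (Subtype.val : annulus → ℝ × ℝ)))
    {z : Strip} (hz : g z = z) :
    ∃ m : ℕ, 1 ≤ m ∧ ∃ r : Icc (1 : ℝ) 2, (r : ℝ) ∈ Ioo (1 : ℝ) 2 ∧
      IA (φ^[m] (cover (0, r))) = φ^[m] (cover (0, r)) := by
  by_contra! hsym
  rcases hg.pos_or_neg (fun r hr => hg.axis_fst_ne_zero (hsym 1 le_rfl r hr)) with h | h
  · exact hg.false_of_axis_pos hφ hsym hz h.1
  · have hIA : Measurable IA :=
      (((measurable_fst.neg.prodMk measurable_snd).comp measurable_subtype_coe :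
        Measurable fun a : annulus => refl2 a)).subtype_mk
    have hχ : Measurable fun a => IA (φ (IA a)) := hIA.comp (hφ.measurable.comp hIA)
    refine hg.mirror_conj.false_of_axis_pos ⟨hχ, ?_⟩ ?_ (z := mirror z) ?_ ?_
    · conv_lhs => rw [← hφ.map_eq]
      rw [Measure.map_map hχ hφ.measurable]
      convert Measure.map_id using 2
      funext a
      exact hg.IA_map_IA_map a
    · intro m hm r hr
      have hfix : IA (cover (0, r)) = cover (0, r) := by rw [← cover_mirror]; simp [mirror]
      have hsc : Function.Semiconj IA φ fun a => IA (φ (IA a)) := fun b => by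
        simp only [IA_IA]
      have := (hsc.iterate_right m) (cover (0, r))
      rw [hfix] at this
      rw [← this, IA_IA]
      exact (hsym m hm r hr).symm
    · rw [mirror_mirror, hz]
    · intro r hr
      simpa [mirror] using h.1 r hr

/-- The square of a reversible homeomorphism of the annulus has a reversible lift. -/
lemma exists_of_reversible {f : annulus → annulus} (hf : Continuous f)
    (hrev : ∀ a, f (IA (f (IA a))) = a) : ∃ G, IsReversibleLift (f ∘ f) G := by
  obtain ⟨F, hF, hFl⟩ := exists_lift hf
  obtain ⟨d, hd⟩ := exists_eq_shift (hF.comp (continuous_shift 1)) hF fun x => by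
    rw [Function.comp_apply, hFl, cover_shift, hFl]
  obtain ⟨m, hm⟩ := exists_eq_shift
    (hF.comp (continuous_mirror.comp (hF.comp continuous_mirror))) continuous_id fun x => by
      simp only [Function.comp_apply, hFl, cover_mirror, hrev, id]
  simp only [Function.comp_apply, id] at hd hm
  have hshift : ∀ (n : ℤ) x, F (Strip.shift n x) = Strip.shift (d * n) (F x) := by
    intro n
    induction n using Int.induction_on with
    | zero => intro x; simp
    | succ i ih =>
      intro x
      rw [← shift_shift, ih, hd, shift_shift, mul_add, mul_one]
    | pred i ih =>
      intro x
      have h := hd (Strip.shift (-i - 1) x)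
      rw [shift_shift, add_sub_cancel, ih] at h
      have := congrArg (Strip.shift (-d)) h
      rw [shift_shift, shift_shift, neg_add_cancel, shift_zero] at this
      rw [← this]
      congr 1
      ring
  let x₀ : Strip := (0, ⟨1, by norm_num⟩)
  have hdd : d * d = 1 := by
    have h := hm (Strip.shift 1 x₀)
    rw [mirror_shift, hshift, mirror_shift, hshift, hm, shift_shift, shift_shift] at h
    have := shift_left_injective x₀ h
    linarith
  have hdm : d * m + m = 0 := by
    have h := hm (F (mirror x₀))
    rw [hm x₀, mirror_shift, hshift] at h
    have := shift_left_injective _ h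
    linarith
  refine ⟨F ∘ F, hF.comp hF, fun n x => ?_, fun x => ?_, fun x => ?_⟩
  · simp only [Function.comp_apply, hshift, ← mul_assoc, hdd, one_mul]
  · have h := hm (mirror (F (mirror x)))
    rw [mirror_mirror] at h
    simp only [Function.comp_apply, h, hshift, hm, shift_shift, hdm, shift_zero]
  · simp only [Function.comp_apply, hFl]

end IsReversibleLift

/-- **Proposition 5.1.** If an area preserving reversible homeomorphism of the
closed annulus has a periodic point, then it has an interior symmetric periodic
point. -/
theorem periodic_point_gives_interior_symmetric_periodic_point
    (f : annulus ≃ₜ annulus)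
    (hrev : ∀ z : annulus, f (IA z) = IA (f.symm z))
    (harea : MeasurePreserving f
      ((volume : Measure (ℝ × ℝ)).comap (Subtype.val : annulus → ℝ × ℝ))
      ((volume : Measure (ℝ × ℝ)).comap (Subtype.val : annulus → ℝ × ℝ)))
    (hper : ∃ (z : annulus) (k : ℕ), 1 ≤ k ∧ (⇑f)^[k] z = z) :
    ∃ z : annulus, (z : ℝ × ℝ) ∈ annulusInt ∧
      (∃ k : ℕ, 1 ≤ k ∧ (⇑f)^[k] z = z) ∧
      (∃ l : ℕ, 1 ≤ l ∧ (⇑f)^[l] z = IA z) := by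
  have hrev' : ∀ a, f (IA (f (IA a))) = a := fun a => by
    rw [hrev (f (IA a)), f.symm_apply_apply, IA_IA]
  obtain ⟨G, hG⟩ := IsReversibleLift.exists_of_reversible f.continuous hrev'
  obtain ⟨z, k, hk, hz⟩ := hper
  have hzk : (f ∘ f)^[k] z = z := by
    rw [(Function.Commute.refl f).comp_iterate, Function.comp_apply, hz, hz]
  obtain ⟨n, hn⟩ := Strip.cover_eq_cover_iff.1 (show
    Strip.cover (G^[k] (Strip.sect z)) = Strip.cover (Strip.sect z) by
      rw [(hG.iterate k).lift, Strip.cover_sect, hzk])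
  obtain ⟨m, hm, r, hr, hfix⟩ := ((hG.iterate k).shift_comp (-n)).exists_symmetric_return
    ((harea.comp harea).iterate k) (z := Strip.sect z) (by
      rw [hn, Strip.shift_shift, neg_add_cancel, Strip.shift_zero])
  have hφ : ((f ∘ f)^[k])^[m] = f^[2 * (k * m)] := by
    rw [← Function.iterate_mul, Function.iterate_mul f]
    rfl
  rw [hφ] at hfix
  have hN : 1 ≤ 2 * (k * m) := by
    have := Nat.mul_pos hk hm
    omega
  set N := 2 * (k * m)
  set x := Strip.cover (0, r) with hx
  have hIx : IA x = x := by rw [hx, ← Strip.cover_mirror]; simp [Strip.mirror]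
  have hrevN : f^[N] (IA (f^[N] x)) = IA x := by
    have key : ∀ j : ℕ, f^[j] (IA (f^[j] x)) = IA x := by
      intro j
      induction j with
      | zero => rfl
      | succ j ih =>
        rw [Function.iterate_succ_apply, Function.iterate_succ_apply', hrev,
          f.symm_apply_apply, ih]
    exact key N
  have hper : f^[N + N] x = x := by
    rw [Function.iterate_add_apply, ← hfix, hrevN, hIx]
  refine ⟨x, ?_, ⟨N + N, by omega, hper⟩, ⟨N + N, by omega, by rw [hper, hIx]⟩⟩
  simpa [annulusInt, hx, Strip.enorm2_cover] using hr
end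
end
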